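/- Let S be a quasi-hereditary algebra, Π ⊆ Λ⁺ a saturated subset, and S(Π) = S/Se_ΓS the corresponding quasi-hereditary quotient, where Γ = Λ⁺ \ Π. For every finite-dimensional S(Π)-module M, the ∇-filtration dimension of M as an S(Π)-module equals the ∇-filtration dimension of M as an S-module, and likewise for the Δ-filtration dimension. -/

import Mathlib

/-!
Common definitions for formalizing "On the global and ∇-filtration dimensions of
quasi-hereditary algebras" by Erdmann and Parker.

We work with a finite-dimensional algebra `S` over a field `k`; since `S` is
finite dimensional over `k`, the finite-dimensional `S`-modules are exactly the
finitely generated ones, so we express finite-dimensionality of a module `M` as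
`Module.Finite S M`.
-/

open CategoryTheory

namespace QHPaper

variable (S : Type) [Ring S]

/-- The subquotient `B ⧸ A` associated to two submodules `A B` of `M`. -/
abbrev subquot {M : ModuleCat.{0} S} (A B : Submodule S ↥M) : Type :=
  ↥B ⧸ (Submodule.comap B.subtype A)

/-- A filtration `⊥ = f 0 ≤ f 1 ≤ ⋯ ≤ f n = ⊤` of `M` whose `i`-th section
`f (i+1) / f i` is isomorphic to the prescribed module `D i`. -/
def HasFiltrationWithSections (M : ModuleCat.{0} S) (n : ℕ)
    (f : Fin (n + 1) → Submodule S ↥M) (D : Fin n → ModuleCat.{0} S) : Prop :=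
  Monotone f ∧ f 0 = ⊥ ∧ f (Fin.last n) = ⊤ ∧
    ∀ i : Fin n, Nonempty ((subquot S (f i.castSucc) (f i.succ)) ≃ₗ[S] ↥(D i))

/-- `L` occurs as a (simple) subquotient of `M`; for `L` simple this says that `L`
is a composition factor of `M`. -/
def IsCompFactor (L M : ModuleCat.{0} S) : Prop :=
  ∃ (A B : Submodule S ↥M), A ≤ B ∧ Nonempty ((subquot S A B) ≃ₗ[S] ↥L)

/-- `L` occurs with multiplicity `m` among the sections of a composition series of `M`. -/
def CompFactorMult (L M : ModuleCat.{0} S) (m : ℕ) : Prop :=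
  ∃ (n : ℕ) (f : Fin (n + 1) → Submodule S ↥M),
    Monotone f ∧ f 0 = ⊥ ∧ f (Fin.last n) = ⊤ ∧
    (∀ i : Fin n, IsSimpleModule S (subquot S (f i.castSucc) (f i.succ))) ∧
    Nat.card {i : Fin n // Nonempty ((subquot S (f i.castSucc) (f i.succ)) ≃ₗ[S] ↥L)} = m

/-- `P` is a projective cover of `M`: `P` is projective and there is a surjection
`P → M` whose kernel is superfluous in `P`. -/
def IsProjCover (P M : ModuleCat.{0} S) : Prop :=
  Module.Projective S ↥P ∧ ∃ π : ↥P →ₗ[S] ↥M, Function.Surjective π ∧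
    ∀ N : Submodule S ↥P, N ⊔ LinearMap.ker π = ⊤ → N = ⊤

/-- `I` is an injective hull of `M`: `I` is injective and there is an injection
`M → I` with essential image. -/
def IsInjHull (I M : ModuleCat.{0} S) : Prop :=
  Module.Injective S ↥I ∧ ∃ ι : ↥M →ₗ[S] ↥I, Function.Injective ι ∧
    ∀ N : Submodule S ↥I, N ⊓ LinearMap.range ι = ⊥ → N = ⊥

/-- The data of a quasi-hereditary algebra structure on `S` with weight poset `Λ`:
a full set `L` of pairwise non-isomorphic simple modules, their projective covers `P`
and injective hulls `I`, the standard modules `std` (largest quotient of `P lam` with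
all composition factors `L mu`, `mu ≤ lam`), the costandard modules `costd`
(largest submodule of `I lam` with all composition factors `L mu`, `mu ≤ lam`),
such that `L lam` occurs exactly once in `std lam` and `P lam` is filtered by
standard modules `std mu` with `mu ≥ lam`, with `std lam` occurring exactly once. -/
structure QHData (Λ : Type) [Fintype Λ] [PartialOrder Λ] where
  L : Λ → ModuleCat.{0} S
  P : Λ → ModuleCat.{0} S
  I : Λ → ModuleCat.{0} S
  std : Λ → ModuleCat.{0} S
  costd : Λ → ModuleCat.{0} S
  finiteL : ∀ lam, Module.Finite S ↥(L lam)
  simpleL : ∀ lam, IsSimpleModule S ↥(L lam)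
  nonisoL : ∀ lam mu, lam ≠ mu → IsEmpty (↥(L lam) ≃ₗ[S] ↥(L mu))
  fullL : ∀ M : ModuleCat.{0} S, IsSimpleModule S ↥M → ∃ lam, Nonempty (↥M ≃ₗ[S] ↥(L lam))
  projCover : ∀ lam, IsProjCover S (P lam) (L lam)
  injHull : ∀ lam, IsInjHull S (I lam) (L lam)
  stdSpec : ∀ lam, ∃ K : Submodule S ↥(P lam),
    Nonempty (↥(std lam) ≃ₗ[S] (↥(P lam) ⧸ K)) ∧
    (∀ mu, IsCompFactor S (L mu) (ModuleCat.of S (↥(P lam) ⧸ K)) → mu ≤ lam) ∧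
    ∀ K' : Submodule S ↥(P lam),
      (∀ mu, IsCompFactor S (L mu) (ModuleCat.of S (↥(P lam) ⧸ K')) → mu ≤ lam) → K ≤ K'
  costdSpec : ∀ lam, ∃ V : Submodule S ↥(I lam),
    Nonempty (↥(costd lam) ≃ₗ[S] ↥V) ∧
    (∀ mu, IsCompFactor S (L mu) (ModuleCat.of S ↥V) → mu ≤ lam) ∧
    ∀ V' : Submodule S ↥(I lam),
      (∀ mu, IsCompFactor S (L mu) (ModuleCat.of S ↥V') → mu ≤ lam) → V' ≤ V
  multOne : ∀ lam, CompFactorMult S (L lam) (std lam) 1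
  projFilt : ∀ lam, ∃ (n : ℕ) (f : Fin (n + 1) → Submodule S ↥(P lam)) (g : Fin n → Λ),
    HasFiltrationWithSections S (P lam) n f (fun i => std (g i)) ∧
    (∀ i, lam ≤ g i) ∧ Nat.card {i : Fin n // g i = lam} = 1

variable {Λ : Type} [Fintype Λ] [PartialOrder Λ]

/-- `M` has a filtration with costandard sections, i.e. `M ∈ F(∇)`. -/
def InCostdFilt (Q : QHData S Λ) (M : ModuleCat.{0} S) : Prop :=
  ∃ (n : ℕ) (f : Fin (n + 1) → Submodule S ↥M) (g : Fin n → Λ),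
    HasFiltrationWithSections S M n f (fun i => Q.costd (g i))

/-- `M` has a filtration with standard sections, i.e. `M ∈ F(Δ)`. -/
def InStdFilt (Q : QHData S Λ) (M : ModuleCat.{0} S) : Prop :=
  ∃ (n : ℕ) (f : Fin (n + 1) → Submodule S ↥M) (g : Fin n → Λ),
    HasFiltrationWithSections S M n f (fun i => Q.std (g i))

/-- `0 → N 0 → N 1 → ⋯ → N (n+1) → 0` is exact. -/
def IsExactSeq (n : ℕ) (N : Fin (n + 2) → ModuleCat.{0} S)
    (f : ∀ i : Fin (n + 1), ↥(N i.castSucc) →ₗ[S] ↥(N i.succ)) : Prop :=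
  Function.Injective (f 0) ∧ Function.Surjective (f (Fin.last n)) ∧
    ∀ i : Fin n, LinearMap.range (f i.castSucc) = LinearMap.ker (f i.succ)

/-- `M` has a ∇-resolution (co-resolution by modules in `F(∇)`) of length `d`:
`0 → M → M₀ → ⋯ → M_d → 0` with each `Mᵢ ∈ F(∇)`. -/
def GfdLE (Q : QHData S Λ) (M : ModuleCat.{0} S) (d : ℕ) : Prop :=
  ∃ (N : Fin (d + 2) → ModuleCat.{0} S)
    (f : ∀ i : Fin (d + 1), ↥(N i.castSucc) →ₗ[S] ↥(N i.succ)),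
    IsExactSeq S d N f ∧ N 0 = M ∧ ∀ i : Fin (d + 1), InCostdFilt S Q (N i.succ)

/-- The ∇-filtration dimension (good filtration dimension) of a module. -/
noncomputable def gfd (Q : QHData S Λ) (M : ModuleCat.{0} S) : ℕ :=
  sInf {d | GfdLE S Q M d}

/-- `M` has a resolution `0 → M_d → ⋯ → M₀ → M → 0` with each `Mᵢ ∈ F(Δ)`. -/
def WfdLE (Q : QHData S Λ) (M : ModuleCat.{0} S) (d : ℕ) : Prop :=
  ∃ (N : Fin (d + 2) → ModuleCat.{0} S)
    (f : ∀ i : Fin (d + 1), ↥(N i.castSucc) →ₗ[S] ↥(N i.succ)),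
    IsExactSeq S d N f ∧ N (Fin.last (d + 1)) = M ∧
    ∀ i : Fin (d + 1), InStdFilt S Q (N i.castSucc)

/-- The Δ-filtration dimension of a module. -/
noncomputable def wfd (Q : QHData S Λ) (M : ModuleCat.{0} S) : ℕ :=
  sInf {d | WfdLE S Q M d}

/-- `M` has a projective resolution of length `d`. -/
def ProjdimLE (M : ModuleCat.{0} S) (d : ℕ) : Prop :=
  ∃ (N : Fin (d + 2) → ModuleCat.{0} S)
    (f : ∀ i : Fin (d + 1), ↥(N i.castSucc) →ₗ[S] ↥(N i.succ)),
    IsExactSeq S d N f ∧ N (Fin.last (d + 1)) = M ∧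
    ∀ i : Fin (d + 1), Module.Projective S ↥(N i.castSucc)

/-- The projective dimension of a module. -/
noncomputable def projdim (M : ModuleCat.{0} S) : ℕ :=
  sInf {d | ProjdimLE S M d}

/-- `M` has an injective resolution of length `d`. -/
def InjdimLE (M : ModuleCat.{0} S) (d : ℕ) : Prop :=
  ∃ (N : Fin (d + 2) → ModuleCat.{0} S)
    (f : ∀ i : Fin (d + 1), ↥(N i.castSucc) →ₗ[S] ↥(N i.succ)),
    IsExactSeq S d N f ∧ N 0 = M ∧
    ∀ i : Fin (d + 1), Module.Injective S ↥(N i.succ)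

/-- The injective dimension of a module. -/
noncomputable def injdim (M : ModuleCat.{0} S) : ℕ :=
  sInf {d | InjdimLE S M d}

/-- `gfd(S)`: the supremum of the ∇-filtration dimensions of all
finite-dimensional `S`-modules. -/
noncomputable def gfdAlg (Q : QHData S Λ) : ℕ :=
  sSup {d | ∃ M : ModuleCat.{0} S, Module.Finite S ↥M ∧ gfd S Q M = d}

/-- `wfd(S)`: the supremum of the Δ-filtration dimensions of all
finite-dimensional `S`-modules. -/
noncomputable def wfdAlg (Q : QHData S Λ) : ℕ :=
  sSup {d | ∃ M : ModuleCat.{0} S, Module.Finite S ↥M ∧ wfd S Q M = d}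

/-- The global dimension of `S`: the supremum of the projective dimensions of all
finite-dimensional `S`-modules. -/
noncomputable def globdim : ℕ :=
  sSup {d | ∃ M : ModuleCat.{0} S, Module.Finite S ↥M ∧ projdim S M = d}

/-- `Ext^n_S(A, B) ≠ 0`. -/
noncomputable def extNe (A B : ModuleCat.{0} S) (n : ℕ) : Prop :=
  Nontrivial ↥(((Ext ℤ (ModuleCat.{0} S) n).obj (Opposite.op A)).obj B)

/-- A simple-preserving duality on `S`: a contravariant, exact, fully faithful,
additive self-functor `D` on the category of finite-dimensional `S`-modules with
`D (D M) ≅ M` and `D (L lam) ≅ L lam` for all `lam`. -/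
structure Duality (Q : QHData S Λ) where
  D : ModuleCat.{0} S → ModuleCat.{0} S
  Dmap : ∀ {A B : ModuleCat.{0} S}, (↥A →ₗ[S] ↥B) → (↥(D B) →ₗ[S] ↥(D A))
  finD : ∀ M : ModuleCat.{0} S, Module.Finite S ↥M → Module.Finite S ↥(D M)
  Did : ∀ A : ModuleCat.{0} S, Module.Finite S ↥A →
    Dmap (LinearMap.id : ↥A →ₗ[S] ↥A) = LinearMap.id
  Dcomp : ∀ {A B C : ModuleCat.{0} S}, Module.Finite S ↥A → Module.Finite S ↥B →
    Module.Finite S ↥C → ∀ (f : ↥A →ₗ[S] ↥B) (g : ↥B →ₗ[S] ↥C),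
      Dmap (g ∘ₗ f) = Dmap f ∘ₗ Dmap g
  Dadd : ∀ {A B : ModuleCat.{0} S}, Module.Finite S ↥A → Module.Finite S ↥B →
    ∀ (f g : ↥A →ₗ[S] ↥B), Dmap (f + g) = Dmap f + Dmap g
  Dfull : ∀ {A B : ModuleCat.{0} S}, Module.Finite S ↥A → Module.Finite S ↥B →
    Function.Bijective (fun f : ↥A →ₗ[S] ↥B => Dmap f)
  Dexact : ∀ {A B C : ModuleCat.{0} S}, Module.Finite S ↥A → Module.Finite S ↥B →
    Module.Finite S ↥C → ∀ (f : ↥A →ₗ[S] ↥B) (g : ↥B →ₗ[S] ↥C),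
      Function.Injective f → Function.Surjective g →
      LinearMap.range f = LinearMap.ker g →
      Function.Injective (Dmap g) ∧ Function.Surjective (Dmap f) ∧
        LinearMap.range (Dmap g) = LinearMap.ker (Dmap f)
  Dinvol : ∀ M : ModuleCat.{0} S, Module.Finite S ↥M → Nonempty (↥(D (D M)) ≃ₗ[S] ↥M)
  DL : ∀ lam, Nonempty (↥(D (Q.L lam)) ≃ₗ[S] ↥(Q.L lam))

/-- Strong property A: `mu < lam` implies `gfd (L mu) < gfd (L lam)`. -/
def StrongPropA (Q : QHData S Λ) : Prop :=
  ∀ mu lam : Λ, mu < lam → gfd S Q (Q.L mu) < gfd S Q (Q.L lam)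

/-- Property A: `mu < lam` implies `gfd (L mu) ≤ gfd (L lam)`. -/
def PropA (Q : QHData S Λ) : Prop :=
  ∀ mu lam : Λ, mu < lam → gfd S Q (Q.L mu) ≤ gfd S Q (Q.L lam)

/-- Property B: `mu < lam` implies `wfd (∇ mu) ≤ wfd (∇ lam)`. -/
def PropB (Q : QHData S Λ) : Prop :=
  ∀ mu lam : Λ, mu < lam → wfd S Q (Q.costd mu) ≤ wfd S Q (Q.costd lam)

/-- Property C: `wfd (∇ lam) = gfd S - inj (∇ lam)` for all `lam`. -/
def PropC (Q : QHData S Λ) : Prop :=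
  ∀ lam : Λ, wfd S Q (Q.costd lam) = gfdAlg S Q - injdim S (Q.costd lam)

/-- Property D: `wfd (∇ lam) = wfd (L lam)` for all `lam`. -/
def PropD (Q : QHData S Λ) : Prop :=
  ∀ lam : Λ, wfd S Q (Q.costd lam) = wfd S Q (Q.L lam)

/-- Property E: `mu < lam` implies `inj (∇ mu) ≥ inj (∇ lam)`. -/
def PropE (Q : QHData S Λ) : Prop :=
  ∀ mu lam : Λ, mu < lam → injdim S (Q.costd lam) ≤ injdim S (Q.costd mu)

/-- The partial order is minimal for the quasi-hereditary structure: whenever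
`mu < lam` are adjacent, `L mu` is a composition factor of `Δ lam` or of `∇ lam`. -/
def MinimalOrder (Q : QHData S Λ) : Prop :=
  ∀ mu lam : Λ, mu < lam → (¬ ∃ nu, mu < nu ∧ nu < lam) →
    IsCompFactor S (Q.L mu) (Q.std lam) ∨ IsCompFactor S (Q.L mu) (Q.costd lam)

/-- `S` is connected (indecomposable as an algebra, i.e. one block): the only
central idempotents are `0` and `1`. -/
def ConnectedRing : Prop :=
  ∀ c : S, c * c = c → (∀ s : S, c * s = s * c) → c = 0 ∨ c = 1

/-- A tilting module: a module in `F(Δ) ∩ F(∇)`. -/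
def IsTilting (Q : QHData S Λ) (T : ModuleCat.{0} S) : Prop :=
  InStdFilt S Q T ∧ InCostdFilt S Q T

/-- The indecomposable tilting module `T(lam)`: an indecomposable tilting module in
which `L lam` occurs exactly once and all other composition factors `L mu` have
`mu < lam`. -/
def IsIndecTilting (Q : QHData S Λ) (lam : Λ) (T : ModuleCat.{0} S) : Prop :=
  IsTilting S Q T ∧ Nontrivial ↥T ∧
    (∀ A B : Submodule S ↥T, IsCompl A B → A = ⊥ ∨ B = ⊥) ∧
    CompFactorMult S (Q.L lam) T 1 ∧
    ∀ mu, IsCompFactor S (Q.L mu) T → mu = lam ∨ mu < lam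

/-- A full tilting module: a (finite-dimensional) tilting module having every
indecomposable tilting module as a direct summand. -/
def IsFullTilting (Q : QHData S Λ) (T : ModuleCat.{0} S) : Prop :=
  IsTilting S Q T ∧ Module.Finite S ↥T ∧
    ∀ (lam : Λ) (Tl : ModuleCat.{0} S), IsIndecTilting S Q lam Tl →
      ∃ Cc : ModuleCat.{0} S, Nonempty (↥T ≃ₗ[S] (↥Tl × ↥Cc))

/-- The Ringel dual ring `S' = End_S(T)^op`. -/
abbrev RingelDualRing (T : ModuleCat.{0} S) : Type := (Module.End S ↥T)ᵐᵒᵖ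

/-- `Hom_S(T, X)` is a module over `S' = End_S(T)^op` via `f • φ = φ ∘ f`. -/
instance homTModule (T X : ModuleCat.{0} S) :
    Module (RingelDualRing S T) (↥T →ₗ[S] ↥X) where
  smul a φ := φ ∘ₗ a.unop
  one_smul φ := rfl
  mul_smul a b φ := rfl
  smul_zero a := rfl
  smul_add a φ ψ := rfl
  add_smul a b φ := by
    ext x
    show φ ((a.unop + b.unop) x) = φ (a.unop x) + φ (b.unop x)
    rw [LinearMap.add_apply, map_add]
  zero_smul φ := by
    ext x
    show φ ((0 : Module.End S ↥T) x) = 0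
    rw [LinearMap.zero_apply, map_zero]

/-- The `S'`-module `Hom_S(T, X)`, i.e. the image of `X` under the functor
`F = Hom_S(T, -)`. -/
noncomputable def homTMod (T X : ModuleCat.{0} S) :
    ModuleCat.{0} (RingelDualRing S T) :=
  ModuleCat.of (RingelDualRing S T) (↥T →ₗ[S] ↥X)

/-- `Q'` is a Ringel dual quasi-hereditary structure for `(Q, T)`:
`T` is a full tilting module, `Q'` is a quasi-hereditary structure on
`S' = End_S(T)^op` for the opposite poset, and its standard modules are
`Δ'(lam) = Hom_S(T, ∇(lam))`. -/
def IsRingelDualData (Q : QHData S Λ) (T : ModuleCat.{0} S)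
    (Q' : QHData (RingelDualRing S T) Λᵒᵈ) : Prop :=
  IsFullTilting S Q T ∧
    ∀ lam : Λ, Nonempty
      (↥(Q'.std (OrderDual.toDual lam)) ≃ₗ[RingelDualRing S T]
        (↥T →ₗ[S] ↥(Q.costd lam)))

/-- `0 → T_d → ⋯ → T_0 → M → 0` exact with all `T_i` tilting modules. -/
def TiltResLE (Q : QHData S Λ) (M : ModuleCat.{0} S) (d : ℕ) : Prop :=
  ∃ (N : Fin (d + 2) → ModuleCat.{0} S)
    (f : ∀ i : Fin (d + 1), ↥(N i.castSucc) →ₗ[S] ↥(N i.succ)),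
    IsExactSeq S d N f ∧ N (Fin.last (d + 1)) = M ∧
    ∀ i : Fin (d + 1), IsTilting S Q (N i.castSucc)

/-- An idempotent `e` is primitive if it is nonzero and is not the sum of two
nonzero orthogonal idempotents. -/
def IsPrimitiveIdempotent (e : S) : Prop :=
  e * e = e ∧ e ≠ 0 ∧ ∀ a b : S, a * a = a → b * b = b → a * b = 0 → b * a = 0 →
    e = a + b → a = 0 ∨ b = 0

/-- The additive subgroup `e•M = {m | e • m = m}` of `M` (for `e` idempotent). -/
def cornerSet (eG : S) (M : ModuleCat.{0} S) : AddSubgroup ↥M where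
  carrier := {m | eG • m = m}
  add_mem' := by
    intro a b ha hb
    simp only [Set.mem_setOf_eq] at *
    rw [smul_add, ha, hb]
  zero_mem' := by
    simp only [Set.mem_setOf_eq]
    rw [smul_zero]
  neg_mem' := by
    intro a ha
    simp only [Set.mem_setOf_eq] at *
    rw [smul_neg, ha]

/-- The `R`-module structure on `e•M`, where `ι : R → S` identifies `R` with the
corner ring `eSe` (as a non-unital ring, with `ι 1 = e`). -/
def cornerModuleStructure (R : Type) [Ring R] (ι : R →ₙ+* S) (eG : S)
    (hone : ι 1 = eG) (hrange : ∀ r : R, eG * ι r * eG = ι r)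
    (M : ModuleCat.{0} S) : Module R ↥(cornerSet S eG M) where
  smul r m := ⟨ι r • (m : ↥M), by
    have hm : eG • (m : ↥M) = (m : ↥M) := m.2
    show eG • (ι r • (m : ↥M)) = ι r • (m : ↥M)
    have h : eG • (ι r • (m : ↥M)) = (eG * ι r * eG) • (m : ↥M) := by
      rw [mul_assoc, mul_smul, mul_smul, hm]
    rw [h, hrange]⟩
  one_smul m := by
    apply Subtype.ext
    show ι 1 • (m : ↥M) = (m : ↥M)
    rw [hone]
    exact m.2
  mul_smul r s m := by
    apply Subtype.ext
    show ι (r * s) • (m : ↥M) = ι r • (ι s • (m : ↥M))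
    rw [map_mul, mul_smul]
  smul_zero r := by
    apply Subtype.ext
    show ι r • (0 : ↥M) = 0
    rw [smul_zero]
  smul_add r m n := by
    apply Subtype.ext
    show ι r • ((m : ↥M) + (n : ↥M)) = ι r • (m : ↥M) + ι r • (n : ↥M)
    rw [smul_add]
  add_smul r s m := by
    apply Subtype.ext
    show ι (r + s) • (m : ↥M) = ι r • (m : ↥M) + ι s • (m : ↥M)
    rw [map_add, add_smul]
  zero_smul m := by
    apply Subtype.ext
    show ι 0 • (m : ↥M) = 0
    rw [map_zero, zero_smul]

/-- The `R`-module `e•M`, where `R ≅ eSe` via `ι`. -/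
noncomputable def cornerMod (R : Type) [Ring R] (ι : R →ₙ+* S) (eG : S)
    (hone : ι 1 = eG) (hrange : ∀ r : R, eG * ι r * eG = ι r)
    (M : ModuleCat.{0} S) : ModuleCat.{0} R :=
  @ModuleCat.of R _ ↥(cornerSet S eG M) _
    (cornerModuleStructure S R ι eG hone hrange M)

end QHPaper


namespace QHProof
open QHPaper

section ExtLemmas
variable {S : Type} [Ring S]

/-- Short exact sequence of linear maps. -/
def SES {A B C : ModuleCat.{0} S} (f : ↥A →ₗ[S] ↥B) (g : ↥B →ₗ[S] ↥C) : Prop :=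
  Function.Injective f ∧ Function.Surjective g ∧ LinearMap.range f = LinearMap.ker g

theorem SES.zero {A B C : ModuleCat.{0} S} {f : ↥A →ₗ[S] ↥B} {g : ↥B →ₗ[S] ↥C}
    (h : SES f g) (a : ↥A) : g (f a) = 0 := by
  have : f a ∈ LinearMap.range f := ⟨a, rfl⟩
  rw [h.2.2] at this
  exact this

theorem SES.ex {A B C : ModuleCat.{0} S} {f : ↥A →ₗ[S] ↥B} {g : ↥B →ₗ[S] ↥C}
    (h : SES f g) (b : ↥B) (hb : g b = 0) : ∃ a, f a = b := by
  have : b ∈ LinearMap.ker g := hb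
  rw [← h.2.2] at this
  exact this

theorem SES.mk' {A B C : ModuleCat.{0} S} {f : ↥A →ₗ[S] ↥B} {g : ↥B →ₗ[S] ↥C}
    (hf : Function.Injective f) (hg : Function.Surjective g) (h0 : ∀ a, g (f a) = 0)
    (h1 : ∀ b, g b = 0 → ∃ a, f a = b) : SES f g := by
  refine ⟨hf, hg, ?_⟩
  ext b
  constructor
  · rintro ⟨a, rfl⟩
    exact h0 a
  · intro hb
    exact h1 b hb

/-- The associated short complex. -/
abbrev SES.sc {A B C : ModuleCat.{0} S} {f : ↥A →ₗ[S] ↥B} {g : ↥B →ₗ[S] ↥C}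
    (h : SES f g) : ShortComplex (ModuleCat.{0} S) :=
  ShortComplex.mk (ModuleCat.ofHom f : A ⟶ B) (ModuleCat.ofHom g : B ⟶ C) (by
    ext a
    exact h.zero a)

theorem SES.se {A B C : ModuleCat.{0} S} {f : ↥A →ₗ[S] ↥B} {g : ↥B →ₗ[S] ↥C}
    (h : SES f g) : h.sc.ShortExact := by
  refine ModuleCat.shortComplex_shortExact _ ?_ h.1 h.2.1
  intro b
  constructor
  · intro hb
    exact h.ex b hb
  · rintro ⟨a, rfl⟩
    exact h.zero a

/-- Vanishing of `Ext^n(A,B)`. -/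
def EV (A B : ModuleCat.{0} S) (n : ℕ) : Prop := ∀ x : Abelian.Ext A B n, x = 0

theorem EV_zero {A B : ModuleCat.{0} S} : EV A B 0 ↔ ∀ f : ↥A →ₗ[S] ↥B, f = 0 := by
  constructor
  · intro h f
    have := h (Abelian.Ext.mk₀ (ModuleCat.ofHom f))
    rw [Abelian.Ext.mk₀_eq_zero_iff] at this
    exact congrArg ModuleCat.Hom.hom this
  · intro h x
    rw [← Abelian.Ext.mk₀_homEquiv₀_apply x, Abelian.Ext.mk₀_eq_zero_iff]
    ext a
    exact congrArg (fun t => t a) (h (ModuleCat.Hom.hom (Abelian.Ext.homEquiv₀ x)))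

section
variable {A B C : ModuleCat.{0} S} {f : ↥A →ₗ[S] ↥B} {g : ↥B →ₗ[S] ↥C}
  {Y : ModuleCat.{0} S} {n : ℕ}

theorem EV_mid (h : SES f g) (hA : EV A Y n) (hC : EV C Y n) : EV B Y n := by
  intro x
  obtain ⟨y, hy⟩ := Abelian.Ext.contravariant_sequence_exact₂ h.se Y (n := n) x (hA _)
  rw [← hy, hC y, Abelian.Ext.comp_zero]

theorem EV_right (h : SES f g) (hA : EV A Y n) (hB : EV B Y (n + 1)) : EV C Y (n + 1) := by
  intro x
  obtain ⟨y, hy⟩ := Abelian.Ext.contravariant_sequence_exact₃ h.se Y x (hB _)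
    (n₀ := n) (by omega)
  rw [← hy, hA y, Abelian.Ext.comp_zero]

theorem EV_left (h : SES f g) (hB : EV B Y n) (hC : EV C Y (n + 1)) : EV A Y n := by
  intro x
  obtain ⟨y, hy⟩ := Abelian.Ext.contravariant_sequence_exact₁ h.se Y x
    (n₁ := n + 1) (by omega) (hC _)
  rw [← hy, hB y, Abelian.Ext.comp_zero]

theorem EV_mid' (h : SES f g) (hA : EV Y A n) (hC : EV Y C n) : EV Y B n := by
  intro x
  obtain ⟨y, hy⟩ := Abelian.Ext.covariant_sequence_exact₂ Y h.se (n := n) x (hC _)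
  rw [← hy, hA y, Abelian.Ext.zero_comp]

theorem EV_right' (h : SES f g) (hB : EV Y B n) (hA : EV Y A (n + 1)) : EV Y C n := by
  intro x
  obtain ⟨y, hy⟩ := Abelian.Ext.covariant_sequence_exact₃ Y h.se x
    (n₁ := n + 1) rfl (hA _)
  rw [← hy, hB y, Abelian.Ext.zero_comp]

/-- lifting of maps along a surjection with `Ext^1` vanishing -/
theorem EV_lift (h : SES f g) (hA : EV Y A 1) (φ : ↥Y →ₗ[S] ↥C) : ∃ ψ : ↥Y →ₗ[S] ↥B, g ∘ₗ ψ = φ := by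
  obtain ⟨y, hy⟩ := Abelian.Ext.covariant_sequence_exact₃ Y h.se
    (Abelian.Ext.mk₀ (ModuleCat.ofHom φ : Y ⟶ C)) (n₁ := 1) rfl (hA _)
  rw [← Abelian.Ext.mk₀_homEquiv₀_apply y, Abelian.Ext.mk₀_comp_mk₀] at hy
  have := (Abelian.Ext.mk₀_bijective _ _).1 hy
  exact ⟨ModuleCat.Hom.hom (Abelian.Ext.homEquiv₀ y), congrArg ModuleCat.Hom.hom this⟩

/-- extension of maps along an injection with `Ext^1` vanishing -/
theorem EV_extend (h : SES f g) (hC : EV C Y 1) (φ : ↥A →ₗ[S] ↥Y) : ∃ ψ : ↥B →ₗ[S] ↥Y, ψ ∘ₗ f = φ := by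
  obtain ⟨y, hy⟩ := Abelian.Ext.contravariant_sequence_exact₁ h.se Y
    (Abelian.Ext.mk₀ (ModuleCat.ofHom φ : A ⟶ Y)) (n₁ := 1) rfl (hC _)
  rw [← Abelian.Ext.mk₀_homEquiv₀_apply y, Abelian.Ext.mk₀_comp_mk₀] at hy
  have := (Abelian.Ext.mk₀_bijective _ _).1 hy
  exact ⟨ModuleCat.Hom.hom (Abelian.Ext.homEquiv₀ y), congrArg ModuleCat.Hom.hom this⟩

/-- `Ext^1` vanishing from extension of maps -/
theorem EV_one_of_extend (h : SES f g) (hB : EV B Y 1)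
    (hext : ∀ φ : ↥A →ₗ[S] ↥Y, ∃ ψ : ↥B →ₗ[S] ↥Y, ψ ∘ₗ f = φ) : EV C Y 1 := by
  intro x
  obtain ⟨y, hy⟩ := Abelian.Ext.contravariant_sequence_exact₃ h.se Y x (hB _)
    (n₀ := 0) (by omega)
  obtain ⟨ψ, hψ⟩ := hext (ModuleCat.Hom.hom (Abelian.Ext.homEquiv₀ y))
  have hy2 : y = (Abelian.Ext.mk₀ h.sc.f).comp
      (Abelian.Ext.mk₀ (ModuleCat.ofHom ψ : B ⟶ Y)) (zero_add 0) := by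
    rw [← Abelian.Ext.mk₀_homEquiv₀_apply y, Abelian.Ext.mk₀_comp_mk₀]
    congr 1
    ext a
    exact (congrArg (fun t => t a) hψ).symm
  rw [← hy, hy2, ShortComplex.ShortExact.extClass_comp_assoc]

end

theorem EV_proj {P Y : ModuleCat.{0} S} (hP : Module.Projective S ↥P) (n : ℕ) :
    EV P Y (n + 1) := by
  intro x
  have : Projective P := inferInstance
  exact Abelian.Ext.eq_zero_of_projective x

theorem EV_subsing {A Y : ModuleCat.{0} S} (hA : Subsingleton ↥A) (n : ℕ) : EV A Y n := by
  cases n with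
  | zero =>
    rw [EV_zero]
    intro f
    ext a
    rw [Subsingleton.elim a 0]
    simp
  | succ n =>
    have : Module.Free S ↥A := Module.Free.of_subsingleton S ↥A
    exact EV_proj Module.Projective.of_free n

theorem EV_subsing' {A Y : ModuleCat.{0} S} (hA : Subsingleton ↥Y) (n : ℕ) : EV A Y n := by
  intro x
  have h : (𝟙 Y) = 0 := by
    ext a
    exact Subsingleton.elim _ _
  rw [← Abelian.Ext.comp_mk₀_id x, h, Abelian.Ext.mk₀_zero, Abelian.Ext.comp_zero]

theorem EV_iso {A B Y : ModuleCat.{0} S} (φ : ↥A ≃ₗ[S] ↥B) {n : ℕ} (h : EV A Y n) :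
    EV B Y n := by
  have : SES (A := A) (B := B) (C := ModuleCat.of S PUnit) φ.toLinearMap 0 :=
    SES.mk' φ.injective (fun x => ⟨0, Subsingleton.elim _ _⟩) (fun _ => rfl)
      (fun b _ => ⟨φ.symm b, by simp⟩)
  exact EV_mid this h (EV_subsing (inferInstanceAs (Subsingleton PUnit)) n)

theorem EV_iso' {A B Y : ModuleCat.{0} S} (φ : ↥A ≃ₗ[S] ↥B) {n : ℕ} (h : EV Y A n) :
    EV Y B n := by
  have : SES (A := A) (B := B) (C := ModuleCat.of S PUnit) φ.toLinearMap 0 :=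
    SES.mk' φ.injective (fun x => ⟨0, Subsingleton.elim _ _⟩) (fun _ => rfl)
      (fun b _ => ⟨φ.symm b, by simp⟩)
  exact EV_mid' this h (EV_subsing' (inferInstanceAs (Subsingleton PUnit)) n)

end ExtLemmas
end QHProof


namespace QHProof
open QHPaper

section FiltLemmas
variable {S : Type} [Ring S]

/-- Modules filtered by modules in the class `C`. -/
inductive Filt (C : ModuleCat.{0} S → Prop) : ModuleCat.{0} S → Prop
  | zero (M : ModuleCat.{0} S) (h : Subsingleton ↥M) : Filt C M
  | ext (A B X : ModuleCat.{0} S) (f : ↥A →ₗ[S] ↥B) (g : ↥B →ₗ[S] ↥X) (h : SES f g)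
      (hA : Filt C A) (hX : C X) : Filt C B

theorem SES.iso_mid {A B B' X : ModuleCat.{0} S} {f : ↥A →ₗ[S] ↥B} {g : ↥B →ₗ[S] ↥X}
    (h : SES f g) (φ : ↥B ≃ₗ[S] ↥B') :
    SES (A := A) (B := B') (C := X) (φ.toLinearMap ∘ₗ f) (g ∘ₗ φ.symm.toLinearMap) := by
  refine SES.mk' ?_ ?_ ?_ ?_
  · exact φ.injective.comp h.1
  · exact h.2.1.comp φ.symm.surjective
  · intro a
    simp [h.zero]
  · intro b hb
    obtain ⟨a, ha⟩ := h.ex (φ.symm b) hb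
    exact ⟨a, by simp [ha]⟩

theorem Filt.iso {C : ModuleCat.{0} S → Prop} {A B : ModuleCat.{0} S} (hA : Filt C A)
    (φ : ↥A ≃ₗ[S] ↥B) : Filt C B := by
  cases hA with
  | zero _ h => exact Filt.zero _ (φ.symm.toEquiv.subsingleton)
  | ext A' _ X f g h hA' hX => exact Filt.ext A' _ X _ _ (h.iso_mid φ) hA' hX

theorem Filt.mono {C D : ModuleCat.{0} S → Prop} (hCD : ∀ X, C X → D X)
    {A : ModuleCat.{0} S} (hA : Filt C A) : Filt D A := by
  induction hA with
  | zero _ h => exact Filt.zero _ h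
  | ext A B X f g h _ hX ih => exact Filt.ext A B X f g h ih (hCD _ hX)

/-- Pulling back an extension to a submodule. -/
theorem Filt.extend {C : ModuleCat.{0} S → Prop} {X : ModuleCat.{0} S} (hX : Filt C X) :
    ∀ {A B : ModuleCat.{0} S} {f : ↥A →ₗ[S] ↥B} {g : ↥B →ₗ[S] ↥X}, SES f g →
      Filt C A → Filt C B := by
  induction hX with
  | zero X h =>
    intro A B f g hs hA
    refine hA.iso (LinearEquiv.ofBijective f ⟨hs.1, fun b => ?_⟩)
    exact hs.ex b (Subsingleton.elim _ _)
  | ext X' X X'' i p hip _ hX'' ih =>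
    intro A B f g hs hA
    let K : Submodule S ↥B := LinearMap.ker (p ∘ₗ g)
    let KM : ModuleCat.{0} S := ModuleCat.of S ↥K
    have hex : ∀ b : ↥K, ∃ x', i x' = g b.1 := fun b => hip.ex _ b.2
    let e : ↥X' ≃ₗ[S] ↥(LinearMap.range i) := LinearEquiv.ofInjective i hip.1
    let g' : ↥KM →ₗ[S] ↥X' := e.symm.toLinearMap ∘ₗ
      LinearMap.codRestrict (LinearMap.range i) (g ∘ₗ K.subtype) (fun b => hex b)
    have hg' : ∀ b : ↥K, i (g' b) = g b.1 := by
      intro b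
      have : e (g' b) = _ := e.apply_symm_apply _
      have := congrArg Subtype.val this
      exact this
    let f' : ↥A →ₗ[S] ↥KM := LinearMap.codRestrict K f (fun a => by
      show p (g (f a)) = 0
      rw [hs.zero, map_zero])
    have h1 : SES f' g' := by
      refine SES.mk' ?_ ?_ ?_ ?_
      · intro a b hab
        exact hs.1 (congrArg Subtype.val hab)
      · intro x
        obtain ⟨b, hb⟩ := hs.2.1 (i x)
        refine ⟨⟨b, ?_⟩, hip.1 ?_⟩
        · show p (g b) = 0
          rw [hb, hip.zero]
        · rw [hg']
          exact hb
      · intro a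
        apply hip.1
        rw [hg', map_zero]
        exact hs.zero a
      · intro b hb
        have : g b.1 = 0 := by rw [← hg', hb, map_zero]
        obtain ⟨a, ha⟩ := hs.ex _ this
        exact ⟨a, Subtype.ext ha⟩
    refine Filt.ext KM B X'' K.subtype (p ∘ₗ g) ?_ (ih h1 hA) hX''
    exact ⟨K.injective_subtype, hip.2.1.comp hs.2.1, K.range_subtype⟩

theorem Filt.of_mem {C : ModuleCat.{0} S → Prop} {X : ModuleCat.{0} S} (hX : C X) :
    Filt C X := by
  refine Filt.ext (ModuleCat.of S PUnit) X X 0 LinearMap.id ?_ (Filt.zero _ ?_) hX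
  · refine SES.mk' ?_ (fun x => ⟨x, rfl⟩) (fun _ => rfl) ?_
    · intro a b _
      exact Subsingleton.elim (α := PUnit) a b
    · intro b hb
      exact ⟨0, by simpa using hb.symm⟩
  · exact inferInstanceAs (Subsingleton PUnit)

/-- One step of a filtration. -/
theorem SES_subquot {M : ModuleCat.{0} S} (A B : Submodule S ↥M) (hAB : A ≤ B) :
    SES (A := ModuleCat.of S ↥A) (B := ModuleCat.of S ↥B)
      (C := ModuleCat.of S (subquot S A B)) (Submodule.inclusion hAB)
      (Submodule.mkQ _) := by
  refine SES.mk' (Submodule.inclusion_injective hAB) (Submodule.mkQ_surjective _) ?_ ?_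
  · intro a
    exact (Submodule.Quotient.mk_eq_zero _).2 a.2
  · intro b hb
    have := (Submodule.Quotient.mk_eq_zero _).1 hb
    exact ⟨⟨b.1, this⟩, rfl⟩

theorem Filt_of_filtration {M : ModuleCat.{0} S} {n : ℕ} {f : Fin (n + 1) → Submodule S ↥M}
    {D : Fin n → ModuleCat.{0} S} (h : HasFiltrationWithSections S M n f D)
    (C : ModuleCat.{0} S → Prop) (hC : ∀ i (X : ModuleCat.{0} S), Nonempty (↥X ≃ₗ[S] ↥(D i)) → C X) (i : Fin (n + 1)) :
    Filt C (ModuleCat.of S ↥(f i)) := by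
  induction i using Fin.induction with
  | zero =>
    refine Filt.zero _ ?_
    rw [h.2.1]
    exact inferInstanceAs (Subsingleton ↥(⊥ : Submodule S ↥M))
  | succ i ih =>
    have hle : f i.castSucc ≤ f i.succ := h.1 (Fin.castSucc_lt_succ).le
    exact Filt.ext _ _ _ _ _ (SES_subquot _ _ hle) ih (hC i _ (h.2.2.2 i))

theorem Filt_of_filtration_top {M : ModuleCat.{0} S} {n : ℕ}
    {f : Fin (n + 1) → Submodule S ↥M}
    {D : Fin n → ModuleCat.{0} S} (h : HasFiltrationWithSections S M n f D)
    (C : ModuleCat.{0} S → Prop) (hC : ∀ i (X : ModuleCat.{0} S), Nonempty (↥X ≃ₗ[S] ↥(D i)) → C X) :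
    Filt C M := by
  refine (Filt_of_filtration h C hC (Fin.last n)).iso ?_
  exact LinearEquiv.ofTop _ h.2.2.1

theorem filtration_of_Filt {I : Type} (D : I → ModuleCat.{0} S) {M : ModuleCat.{0} S}
    (h : Filt (fun X => ∃ i, Nonempty (↥X ≃ₗ[S] ↥(D i))) M) :
    ∃ (n : ℕ) (f : Fin (n + 1) → Submodule S ↥M) (g : Fin n → I),
      HasFiltrationWithSections S M n f (fun i => D (g i)) := by
  induction h with
  | zero M h =>
    refine ⟨0, fun _ => ⊥, Fin.elim0, monotone_const, rfl, ?_, fun i => i.elim0⟩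
    exact Subsingleton.elim _ _
  | ext A B X i p hs _ hX ih =>
    obtain ⟨n, f, g, hm, h0, h1, hsec⟩ := ih
    obtain ⟨l, ⟨φ⟩⟩ := hX
    refine ⟨n + 1, Fin.snoc (α := fun _ => Submodule S ↥B) (fun j => (f j).map i) ⊤,
      Fin.snoc (α := fun _ => I) g l, ?_, ?_, ?_, ?_⟩
    · rw [Fin.monotone_iff_le_succ]
      intro j
      induction j using Fin.lastCases with
      | last =>
        rw [Fin.succ_last, Fin.snoc_last]
        exact le_top
      | cast j =>
        rw [← Fin.castSucc_succ, Fin.snoc_castSucc, Fin.snoc_castSucc]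
        exact Submodule.map_mono (hm (Fin.castSucc_lt_succ).le)
    · have : (0 : Fin (n + 1 + 1)) = Fin.castSucc 0 := rfl
      rw [this, Fin.snoc_castSucc, h0, Submodule.map_bot]
    · rw [Fin.snoc_last]
    · intro j
      induction j using Fin.lastCases with
      | last =>
        rw [Fin.succ_last, Fin.snoc_last, Fin.snoc_castSucc, h1]
        beta_reduce
        rw [Fin.snoc_last]
        let r : ↥(⊤ : Submodule S ↥B) →ₗ[S] ↥X := p ∘ₗ (⊤ : Submodule S ↥B).subtype
        have hr : Function.Surjective r := fun x => by
          obtain ⟨b, hb⟩ := hs.2.1 x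
          exact ⟨⟨b, trivial⟩, hb⟩
        refine ⟨LinearEquiv.trans (LinearEquiv.trans
          (Submodule.quotEquivOfEq _ (LinearMap.ker r) ?_)
          (r.quotKerEquivOfSurjective hr)) φ⟩
        rw [Submodule.map_top, hs.2.2]
        rfl
      | cast j =>
        rw [← Fin.castSucc_succ, Fin.snoc_castSucc, Fin.snoc_castSucc]
        beta_reduce
        rw [Fin.snoc_castSucc]
        obtain ⟨ψ⟩ := hsec j
        let em := Submodule.equivMapOfInjective i hs.1 (f j.succ)
        refine ⟨LinearEquiv.trans (Submodule.Quotient.equiv _ _ em ?_).symm ψ⟩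
        ext ⟨y, hy⟩
        constructor
        · rintro ⟨x, hx, hxy⟩
          refine ⟨x.1, hx, ?_⟩
          exact congrArg Subtype.val hxy
        · rintro ⟨x, hx, hxy⟩
          obtain ⟨x', hx', rfl⟩ := hy
          have : x = x' := hs.1 hxy
          subst this
          exact ⟨⟨x, hx'⟩, hx, rfl⟩

variable {Λ : Type} [Fintype Λ] [PartialOrder Λ]

theorem InStdFilt_iff (Q : QHData S Λ) (M : ModuleCat.{0} S) :
    InStdFilt S Q M ↔ Filt (fun X => ∃ i, Nonempty (↥X ≃ₗ[S] ↥(Q.std i))) M := by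
  constructor
  · rintro ⟨n, f, g, h⟩
    exact Filt_of_filtration_top h _ (fun i X hX => ⟨g i, hX⟩)
  · exact filtration_of_Filt Q.std

theorem InCostdFilt_iff (Q : QHData S Λ) (M : ModuleCat.{0} S) :
    InCostdFilt S Q M ↔ Filt (fun X => ∃ i, Nonempty (↥X ≃ₗ[S] ↥(Q.costd i))) M := by
  constructor
  · rintro ⟨n, f, g, h⟩
    exact Filt_of_filtration_top h _ (fun i X hX => ⟨g i, hX⟩)
  · exact filtration_of_Filt Q.costd

/-- Replacing the terms of an exact sequence by isomorphic ones. -/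
theorem IsExactSeq_iso {n : ℕ} {N N' : Fin (n + 2) → ModuleCat.{0} S}
    {f : ∀ i : Fin (n + 1), ↥(N i.castSucc) →ₗ[S] ↥(N i.succ)}
    (h : IsExactSeq S n N f) (ε : ∀ i, ↥(N' i) ≃ₗ[S] ↥(N i)) :
    IsExactSeq S n N' (fun i => (ε i.succ).symm.toLinearMap ∘ₗ f i ∘ₗ
      (ε i.castSucc).toLinearMap) := by
  refine ⟨?_, ?_, ?_⟩
  · exact (ε _).symm.injective.comp (h.1.comp (ε _).injective)
  · exact (ε _).symm.surjective.comp (h.2.1.comp (ε _).surjective)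
  · intro i
    have := h.2.2 i
    ext x
    constructor
    · rintro ⟨y, rfl⟩
      have h2 : f i.castSucc (ε _ y) ∈ LinearMap.ker (f i.succ) := by
        rw [← this]
        exact ⟨_, rfl⟩
      have h3 : f i.succ (f i.castSucc (ε _ y)) = 0 := h2
      have h4 : (ε i.castSucc.succ) ((ε i.castSucc.succ).symm (f i.castSucc (ε _ y)))
        = f i.castSucc (ε _ y) := LinearEquiv.apply_symm_apply _ _
      show (ε i.succ.succ).symm (f i.succ ((ε i.castSucc.succ)
        ((ε i.castSucc.succ).symm (f i.castSucc (ε _ y))))) = 0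
      rw [h4, h3, map_zero]
    · intro hx
      have h1 : (ε i.succ.succ).symm (f i.succ (ε i.castSucc.succ x)) = 0 := hx
      have h2 : ε i.castSucc.succ x ∈ LinearMap.ker (f i.succ) :=
        (ε i.succ.succ).symm.injective (by rw [h1, map_zero])
      rw [← this] at h2
      obtain ⟨y, hy⟩ := h2
      refine ⟨(ε _).symm y, ?_⟩
      show (ε i.castSucc.succ).symm (f i.castSucc ((ε i.castSucc.castSucc)
        ((ε i.castSucc.castSucc).symm y))) = x
      rw [LinearEquiv.apply_symm_apply, hy, LinearEquiv.symm_apply_apply]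

/-- Resolutions only need to end in something isomorphic to `M`. -/
theorem exactSeq_replace {n : ℕ} {N : Fin (n + 2) → ModuleCat.{0} S}
    {f : ∀ i : Fin (n + 1), ↥(N i.castSucc) →ₗ[S] ↥(N i.succ)}
    (h : IsExactSeq S n N f) (j : Fin (n + 2)) (M : ModuleCat.{0} S)
    (φ : ↥M ≃ₗ[S] ↥(N j)) :
    ∃ (N' : Fin (n + 2) → ModuleCat.{0} S)
      (f' : ∀ i : Fin (n + 1), ↥(N' i.castSucc) →ₗ[S] ↥(N' i.succ)),
      IsExactSeq S n N' f' ∧ N' j = M ∧ ∀ i, i ≠ j → N' i = N i := by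
  classical
  let N' : Fin (n + 2) → ModuleCat.{0} S := Function.update N j M
  have hj : N' j = M := Function.update_self _ _ _
  have hi : ∀ i, i ≠ j → N' i = N i := fun i hij => Function.update_of_ne hij _ _
  have hε : ∀ i, Nonempty (↥(N' i) ≃ₗ[S] ↥(N i)) := by
    intro i
    by_cases hij : i = j
    · subst hij
      rw [hj]
      exact ⟨φ⟩
    · rw [hi i hij]
      exact ⟨LinearEquiv.refl _ _⟩
  exact ⟨N', _, IsExactSeq_iso h (fun i => (hε i).some), hj, hi⟩

end FiltLemmas
end QHProof


namespace QHProof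
open QHPaper

section Trace
variable {S : Type} [Ring S] (ε : S)

/-- `SεN`. -/
def JN (N : Type) [AddCommGroup N] [Module S N] : Submodule S N :=
  Submodule.span S (Set.range (fun n : N => ε • n))

/-- The largest submodule killed by `SεS`. -/
def ON (N : Type) [AddCommGroup N] [Module S N] : Submodule S N where
  carrier := {n | ∀ s : S, ε • s • n = 0}
  add_mem' := by
    intro a b ha hb s
    rw [smul_add, smul_add, ha s, hb s, add_zero]
  zero_mem' := by
    intro s
    rw [smul_zero, smul_zero]
  smul_mem' := by
    intro c x hx s
    rw [smul_smul s c x]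
    exact hx _

variable {ε}

theorem mem_JN {N : Type} [AddCommGroup N] [Module S N] (n : N) : ε • n ∈ JN ε N :=
  Submodule.subset_span ⟨n, rfl⟩

theorem mem_ON {N : Type} [AddCommGroup N] [Module S N] (n : N) :
    n ∈ ON ε N ↔ ∀ s : S, ε • s • n = 0 := Iff.rfl

section
variable {A B : Type} [AddCommGroup A] [Module S A] [AddCommGroup B] [Module S B]

theorem JN_le {W : Submodule S A} (h : ∀ a : A, ε • a ∈ W) : JN ε A ≤ W := by
  refine Submodule.span_le.2 ?_
  rintro _ ⟨a, rfl⟩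
  exact h a

theorem JN_map (f : A →ₗ[S] B) {a : A} (ha : a ∈ JN ε A) : f a ∈ JN ε B := by
  have : JN ε A ≤ (JN ε B).comap f := JN_le (fun a => by
    show f (ε • a) ∈ JN ε B
    rw [map_smul]
    exact mem_JN _)
  exact this ha

theorem JN_surj (f : A →ₗ[S] B) (hf : Function.Surjective f) {b : B} (hb : b ∈ JN ε B) :
    ∃ a ∈ JN ε A, f a = b := by
  have : JN ε B ≤ (JN ε A).map f := JN_le (fun b => by
    obtain ⟨a, rfl⟩ := hf b
    exact ⟨ε • a, mem_JN a, map_smul _ _ _⟩)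
  exact this hb

theorem JN_JN (hε : ε * ε = ε) : JN ε ↥(JN ε A) = ⊤ := by
  have : JN ε A ≤ (JN ε ↥(JN ε A)).map (JN ε A).subtype := JN_le (fun a => by
    refine ⟨ε • ⟨ε • a, mem_JN a⟩, mem_JN _, ?_⟩
    show ε • ε • a = ε • a
    rw [smul_smul, hε])
  rw [eq_top_iff]
  rintro ⟨x, hx⟩ _
  obtain ⟨y, hy, hyx⟩ := this hx
  have : y = ⟨x, hx⟩ := Subtype.ext hyx
  exact this ▸ hy

theorem hom_zero_of_JN (hA : JN ε A = ⊤) (hB : ∀ b : B, ε • b = 0) (f : A →ₗ[S] B) :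
    f = 0 := by
  have : JN ε A ≤ LinearMap.ker f := JN_le (fun a => by
    show f (ε • a) = 0
    rw [map_smul, hB])
  ext a
  exact this (hA ▸ trivial)

theorem ON_map (f : A →ₗ[S] B) {a : A} (ha : a ∈ ON ε A) : f a ∈ ON ε B := by
  intro s
  rw [← map_smul, ← map_smul, ha s, map_zero]

theorem ON_inj (f : A →ₗ[S] B) (hf : Function.Injective f) {a : A} (ha : f a ∈ ON ε B) :
    a ∈ ON ε A := by
  intro s
  apply hf
  rw [map_smul, map_smul, ha s, map_zero]

theorem ON_tor (a : ↥(ON ε A)) : ε • a = 0 := by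
  apply Subtype.ext
  have := a.2 1
  rw [one_smul] at this
  exact this

theorem JQ_tor (a : A ⧸ JN ε A) : ε • a = 0 := by
  obtain ⟨a, rfl⟩ := Submodule.mkQ_surjective _ a
  rw [← map_smul]
  exact (Submodule.Quotient.mk_eq_zero _).2 (mem_JN a)
end

variable (ε) in
/-- Modules all of whose `Ext` groups to `ε`-torsion modules vanish. -/
def Ycl (Y : ModuleCat.{0} S) : Prop :=
  ∀ M : ModuleCat.{0} S, (∀ m : ↥M, ε • m = 0) → ∀ n, EV Y M n

theorem Ycl.top {Y : ModuleCat.{0} S} (h : Ycl ε Y) : JN ε ↥Y = ⊤ := by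
  have h1 := EV_zero.1 (h (ModuleCat.of S (↥Y ⧸ JN ε ↥Y)) JQ_tor 0) (Submodule.mkQ _)
  rw [eq_top_iff]
  intro y _
  have := congrArg (fun t => t y) h1
  exact (Submodule.Quotient.mk_eq_zero _).1 this

variable (ε) in
def Dcl (C : ModuleCat.{0} S) : Prop := Ycl ε (ModuleCat.of S ↥(JN ε ↥C))

section
variable {Z N C : ModuleCat.{0} S} {f : ↥Z →ₗ[S] ↥N} {g : ↥N →ₗ[S] ↥C}

theorem SES_J (h : SES f g) :
    ∃ (f' : ↥(ModuleCat.of S ↥((JN ε ↥N).comap f)) →ₗ[S] ↥(ModuleCat.of S ↥(JN ε ↥N)))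
      (g' : ↥(ModuleCat.of S ↥(JN ε ↥N)) →ₗ[S] ↥(ModuleCat.of S ↥(JN ε ↥C))),
      SES f' g' := by
  refine ⟨f.restrict (p := (JN ε ↥N).comap f) (q := JN ε ↥N) (fun x hx => hx),
    g.restrict (p := JN ε ↥N) (q := JN ε ↥C) (fun x hx => JN_map g hx), ?_⟩
  refine SES.mk' ?_ ?_ ?_ ?_
  · intro a b hab
    exact Subtype.ext (h.1 (congrArg Subtype.val hab))
  · rintro ⟨c, hc⟩
    obtain ⟨n, hn, rfl⟩ := JN_surj g h.2.1 hc
    exact ⟨⟨n, hn⟩, rfl⟩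
  · intro a
    exact Subtype.ext (h.zero a.1)
  · rintro ⟨b, hb⟩ hb0
    obtain ⟨a, rfl⟩ := h.ex b (congrArg Subtype.val hb0)
    exact ⟨⟨a, hb⟩, rfl⟩

theorem JN_le_comap (f : ↥Z →ₗ[S] ↥N) : JN ε ↥Z ≤ (JN ε ↥N).comap f :=
  fun _ hz => JN_map f hz

theorem D_ker (h : SES f g) (hN : Dcl ε N) (hC : Dcl ε C) :
    Dcl ε Z ∧ (JN ε ↥N).comap f = JN ε ↥Z := by
  obtain ⟨f', g', h'⟩ := SES_J (ε := ε) h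
  have hY : Ycl ε (ModuleCat.of S ↥((JN ε ↥N).comap f)) :=
    fun M hM n => EV_left h' (hN M hM n) (hC M hM (n + 1))
  have hW : (JN ε ↥N).comap f = JN ε ↥Z := by
    refine le_antisymm ?_ (JN_le_comap f)
    intro z hz
    have h1 : (⟨z, hz⟩ : ↥((JN ε ↥N).comap f)) ∈ JN ε ↥((JN ε ↥N).comap f) := by
      have := hY.top
      exact this.symm ▸ trivial
    exact JN_map ((JN ε ↥N).comap f).subtype h1
  refine ⟨?_, hW⟩
  unfold Dcl
  rw [← hW]
  exact hY

theorem D_ext (hε : ε * ε = ε) (h : SES f g) (hZ : Dcl ε Z) (hC : Dcl ε C) :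
    Dcl ε N ∧ (JN ε ↥N).comap f = JN ε ↥Z := by
  obtain ⟨f', g', h'⟩ := SES_J (ε := ε) h
  have hW : (JN ε ↥N).comap f = JN ε ↥Z := by
    refine le_antisymm ?_ (JN_le_comap f)
    intro z hz
    let K : Submodule S ↥((JN ε ↥N).comap f) :=
      (JN ε ↥Z).comap ((JN ε ↥N).comap f).subtype
    let Wq : ModuleCat.{0} S := ModuleCat.of S (↥((JN ε ↥N).comap f) ⧸ K)
    have htor : ∀ w : ↥Wq, ε • w = 0 := by
      intro w
      obtain ⟨w, rfl⟩ := Submodule.mkQ_surjective K w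
      rw [← map_smul]
      exact (Submodule.Quotient.mk_eq_zero _).2 (mem_JN (w : ↥Z))
    obtain ⟨ψ, hψ⟩ := EV_extend h' (hC Wq htor 1) K.mkQ
    have h0 : ψ = 0 := hom_zero_of_JN (JN_JN hε) htor ψ
    rw [h0] at hψ
    have h1 : K.mkQ ⟨z, hz⟩ = 0 := (congrArg (fun t => t ⟨z, hz⟩) hψ).symm
    have h2 := (Submodule.Quotient.mk_eq_zero K).1 h1
    exact h2
  refine ⟨?_, hW⟩
  intro M hM n
  have hW' : Dcl ε Z ↔ Ycl ε (ModuleCat.of S ↥((JN ε ↥N).comap f)) := by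
    rw [hW]
    rfl
  exact EV_mid h' (hW'.1 hZ M hM n) (hC M hM n)

theorem SES_Q (h : SES f g) (hW : (JN ε ↥N).comap f = JN ε ↥Z) :
    SES (A := ModuleCat.of S (↥Z ⧸ JN ε ↥Z)) (B := ModuleCat.of S (↥N ⧸ JN ε ↥N))
      (C := ModuleCat.of S (↥C ⧸ JN ε ↥C))
      (Submodule.mapQ _ _ f (fun _ hz => JN_map f hz))
      (Submodule.mapQ _ _ g (fun _ hz => JN_map g hz)) := by
  refine SES.mk' ?_ ?_ ?_ ?_
  · rw [injective_iff_map_eq_zero]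
    intro a ha
    obtain ⟨a, rfl⟩ := Submodule.mkQ_surjective _ a
    have : f a ∈ JN ε ↥N := (Submodule.Quotient.mk_eq_zero _).1 ha
    refine (Submodule.Quotient.mk_eq_zero _).2 ?_
    rw [← hW]
    exact this
  · intro c
    obtain ⟨c, rfl⟩ := Submodule.mkQ_surjective _ c
    obtain ⟨n, rfl⟩ := h.2.1 c
    exact ⟨Submodule.mkQ _ n, rfl⟩
  · intro a
    obtain ⟨a, rfl⟩ := Submodule.mkQ_surjective _ a
    refine (Submodule.Quotient.mk_eq_zero _).2 ?_
    rw [h.zero]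
    exact zero_mem _
  · intro b hb
    obtain ⟨b, rfl⟩ := Submodule.mkQ_surjective _ b
    have : g b ∈ JN ε ↥C := (Submodule.Quotient.mk_eq_zero _).1 hb
    obtain ⟨b', hb', hbb⟩ := JN_surj g h.2.1 this
    obtain ⟨a, ha⟩ := h.ex (b - b') (by rw [map_sub, hbb, sub_self])
    refine ⟨Submodule.mkQ _ a, ?_⟩
    show Submodule.mkQ _ (f a) = Submodule.mkQ _ b
    rw [ha, map_sub, sub_eq_self]
    exact (Submodule.Quotient.mk_eq_zero _).2 hb'

end

theorem D_tor {M : ModuleCat.{0} S} (hM : ∀ m : ↥M, ε • m = 0) : Dcl ε M := by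
  intro X _ n
  refine EV_subsing ?_ n
  have : JN ε ↥M = ⊥ := by
    rw [eq_bot_iff]
    exact JN_le (fun a => by rw [hM]; exact zero_mem _)
  show Subsingleton ↥(JN ε ↥M)
  rw [this]
  infer_instance

theorem Filt_D (hε : ε * ε = ε) {C E : ModuleCat.{0} S → Prop}
    (hC : ∀ X, C X → Dcl ε X ∧ Filt E (ModuleCat.of S (↥X ⧸ JN ε ↥X)))
    {N : ModuleCat.{0} S} (hN : Filt C N) :
    Dcl ε N ∧ Filt E (ModuleCat.of S (↥N ⧸ JN ε ↥N)) := by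
  induction hN with
  | zero M h =>
    refine ⟨D_tor (fun m => Subsingleton.elim _ _), Filt.zero _ ?_⟩
    exact (Submodule.mkQ_surjective (JN ε ↥M)).subsingleton
  | ext A B X f g h _ hX ih =>
    obtain ⟨h1, h2⟩ := D_ext hε h ih.1 (hC X hX).1
    exact ⟨h1, Filt.extend (hC X hX).2 (SES_Q h h2) ih.2⟩

/-! Dual part -/

variable (ε) in
/-- The left module `S/SεS`. -/
abbrev RM : ModuleCat.{0} S := ModuleCat.of S (S ⧸ JN ε S)

theorem RM_hom {Y : ModuleCat.{0} S} {y : ↥Y} (hy : y ∈ ON ε ↥Y) :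
    ∃ φ : ↥(RM ε) →ₗ[S] ↥Y, φ (Submodule.mkQ _ 1) = y := by
  refine ⟨Submodule.liftQ _ (LinearMap.toSpanSingleton S ↥Y y) (JN_le ?_), ?_⟩
  · intro s
    show (ε • s) • y = 0
    rw [smul_assoc]
    exact hy s
  · show (1 : S) • y = y
    rw [one_smul]

theorem RM_hom_mem {Y : ModuleCat.{0} S} (φ : ↥(RM ε) →ₗ[S] ↥Y) :
    φ (Submodule.mkQ _ 1) ∈ ON ε ↥Y := by
  intro s
  rw [← map_smul, ← map_smul, JQ_tor, map_zero]

variable (ε) in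
def Ycl' (Y : ModuleCat.{0} S) : Prop := ∀ n, EV (RM ε) Y n

theorem Ycl'.zero {Y : ModuleCat.{0} S} (h : Ycl' ε Y) (y : ↥Y) (hy : y ∈ ON ε ↥Y) :
    y = 0 := by
  obtain ⟨φ, rfl⟩ := RM_hom hy
  rw [EV_zero.1 (h 0) φ]
  rfl

variable (ε) in
def Dcl' (C : ModuleCat.{0} S) : Prop := Ycl' ε (ModuleCat.of S (↥C ⧸ ON ε ↥C))

section
variable {Z N C : ModuleCat.{0} S} {f : ↥Z →ₗ[S] ↥N} {g : ↥N →ₗ[S] ↥C}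

theorem SES_O (h : SES f g) :
    SES (A := ModuleCat.of S (↥Z ⧸ ON ε ↥Z)) (B := ModuleCat.of S (↥N ⧸ ON ε ↥N))
      (C := ModuleCat.of S (↥C ⧸ (ON ε ↥N).map g))
      (Submodule.mapQ _ _ f (fun _ hz => ON_map f hz))
      (Submodule.mapQ _ _ g (fun z hz => ⟨z, hz, rfl⟩)) := by
  refine SES.mk' ?_ ?_ ?_ ?_
  · rw [injective_iff_map_eq_zero]
    intro a ha
    obtain ⟨a, rfl⟩ := Submodule.mkQ_surjective _ a
    have : f a ∈ ON ε ↥N := (Submodule.Quotient.mk_eq_zero _).1 ha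
    exact (Submodule.Quotient.mk_eq_zero _).2 (ON_inj f h.1 this)
  · intro c
    obtain ⟨c, rfl⟩ := Submodule.mkQ_surjective _ c
    obtain ⟨n, rfl⟩ := h.2.1 c
    exact ⟨Submodule.mkQ _ n, rfl⟩
  · intro a
    obtain ⟨a, rfl⟩ := Submodule.mkQ_surjective _ a
    refine (Submodule.Quotient.mk_eq_zero _).2 ?_
    rw [h.zero]
    exact zero_mem _
  · intro b hb
    obtain ⟨b, rfl⟩ := Submodule.mkQ_surjective _ b
    obtain ⟨b', hb', hbb⟩ := (Submodule.Quotient.mk_eq_zero _).1 hb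
    obtain ⟨a, ha⟩ := h.ex (b - b') (by rw [map_sub, hbb, sub_self])
    refine ⟨Submodule.mkQ _ a, ?_⟩
    show Submodule.mkQ _ (f a) = Submodule.mkQ _ b
    rw [ha, map_sub, sub_eq_self]
    exact (Submodule.Quotient.mk_eq_zero _).2 hb'

theorem map_ON_le (g : ↥N →ₗ[S] ↥C) : (ON ε ↥N).map g ≤ ON ε ↥C := by
  rintro _ ⟨n, hn, rfl⟩
  exact ON_map g hn

theorem D'_coker (h : SES f g) (hZ : Dcl' ε Z) (hN : Dcl' ε N) :
    Dcl' ε C ∧ (ON ε ↥N).map g = ON ε ↥C := by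
  have hY : Ycl' ε (ModuleCat.of S (↥C ⧸ (ON ε ↥N).map g)) :=
    fun n => EV_right' (SES_O h) (hN n) (hZ (n + 1))
  have hW : (ON ε ↥N).map g = ON ε ↥C := by
    refine le_antisymm (map_ON_le g) ?_
    intro c hc
    have := hY.zero (Submodule.mkQ _ c) (ON_map _ hc)
    exact (Submodule.Quotient.mk_eq_zero _).1 this
  refine ⟨?_, hW⟩
  unfold Dcl'
  rw [← hW]
  exact hY

theorem D'_ext (hε : ε * ε = ε) (h : SES f g) (hZ : Dcl' ε Z) (hC : Dcl' ε C) :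
    Dcl' ε N ∧ (ON ε ↥N).map g = ON ε ↥C := by
  have hW : (ON ε ↥N).map g = ON ε ↥C := by
    refine le_antisymm (map_ON_le g) ?_
    intro c hc
    let K : Submodule S ↥N := (ON ε ↥Z).map f
    have hs : SES (A := ModuleCat.of S (↥Z ⧸ ON ε ↥Z)) (B := ModuleCat.of S (↥N ⧸ K)) (C := C)
        (Submodule.mapQ _ _ f (fun z hz => ⟨z, hz, rfl⟩))
        (Submodule.liftQ K g (by
          rintro _ ⟨z, _, rfl⟩
          exact h.zero z)) := by
      refine SES.mk' ?_ ?_ ?_ ?_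
      · rw [injective_iff_map_eq_zero]
        intro a ha
        obtain ⟨a, rfl⟩ := Submodule.mkQ_surjective _ a
        obtain ⟨a', ha', haa⟩ : f a ∈ K := (Submodule.Quotient.mk_eq_zero _).1 ha
        have := h.1 haa
        subst this
        exact (Submodule.Quotient.mk_eq_zero _).2 ha'
      · intro c
        obtain ⟨n, rfl⟩ := h.2.1 c
        exact ⟨Submodule.mkQ _ n, rfl⟩
      · intro a
        obtain ⟨a, rfl⟩ := Submodule.mkQ_surjective _ a
        exact h.zero a
      · intro b hb
        obtain ⟨b, rfl⟩ := Submodule.mkQ_surjective _ b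
        obtain ⟨a, rfl⟩ := h.ex b hb
        exact ⟨Submodule.mkQ _ a, rfl⟩
    obtain ⟨φ, hφ⟩ := RM_hom hc
    obtain ⟨ψ, hψ⟩ := EV_lift hs (hZ 1) φ
    have hm := RM_hom_mem ψ
    obtain ⟨n, hn⟩ := Submodule.mkQ_surjective K (ψ (Submodule.mkQ _ 1))
    rw [← hn] at hm
    have hψ1 := congrArg (fun t => t (Submodule.mkQ _ 1)) hψ
    refine ⟨n, ?_, ?_⟩
    · intro s
      have h1 := hm s
      rw [← map_smul, ← map_smul] at h1
      obtain ⟨z, hz, hzz⟩ := (Submodule.Quotient.mk_eq_zero _).1 h1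
      have h2 : ε • z = 0 := by
        have := hz 1
        rwa [one_smul] at this
      rw [← hε, mul_smul, ← hzz, ← map_smul, h2, map_zero]
    · dsimp only at hψ1
      rw [LinearMap.comp_apply, ← hn] at hψ1
      exact hψ1.trans hφ
  refine ⟨?_, hW⟩
  intro n
  refine EV_mid' (SES_O (ε := ε) h) (hZ n) ?_
  rw [hW]
  exact hC n

theorem SES_ON (h : SES f g) (hW : (ON ε ↥N).map g = ON ε ↥C) :
    SES (A := ModuleCat.of S ↥(ON ε ↥Z)) (B := ModuleCat.of S ↥(ON ε ↥N))
      (C := ModuleCat.of S ↥(ON ε ↥C))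
      (f.restrict (fun _ hz => ON_map f hz))
      (g.restrict (fun _ hz => ON_map g hz)) := by
  refine SES.mk' ?_ ?_ ?_ ?_
  · intro a b hab
    exact Subtype.ext (h.1 (congrArg Subtype.val hab))
  · rintro ⟨c, hc⟩
    obtain ⟨n, hn, rfl⟩ : c ∈ (ON ε ↥N).map g := by rw [hW]; exact hc
    exact ⟨⟨n, hn⟩, rfl⟩
  · intro a
    exact Subtype.ext (h.zero a.1)
  · rintro ⟨b, hb⟩ hb0
    obtain ⟨a, rfl⟩ := h.ex b (congrArg Subtype.val hb0)
    exact ⟨⟨a, ON_inj f h.1 hb⟩, rfl⟩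
end

theorem ON_top {M : ModuleCat.{0} S} (hM : ∀ m : ↥M, ε • m = 0) : ON ε ↥M = ⊤ := by
  rw [eq_top_iff]
  intro m _ s
  exact hM _

theorem D'_tor {M : ModuleCat.{0} S} (hM : ∀ m : ↥M, ε • m = 0) : Dcl' ε M := by
  intro n
  refine EV_subsing' ?_ n
  show Subsingleton (↥M ⧸ ON ε ↥M)
  rw [Submodule.Quotient.subsingleton_iff]
  exact ON_top hM

theorem Filt_D' (hε : ε * ε = ε) {C E : ModuleCat.{0} S → Prop}
    (hC : ∀ X, C X → Dcl' ε X ∧ Filt E (ModuleCat.of S ↥(ON ε ↥X)))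
    {N : ModuleCat.{0} S} (hN : Filt C N) :
    Dcl' ε N ∧ Filt E (ModuleCat.of S ↥(ON ε ↥N)) := by
  induction hN with
  | zero M h =>
    refine ⟨D'_tor (fun m => Subsingleton.elim _ _), Filt.zero _ ?_⟩
    exact inferInstanceAs (Subsingleton ↥(ON ε ↥M))
  | ext A B X f g h _ hX ih =>
    obtain ⟨h1, h2⟩ := D'_ext hε h ih.1 (hC X hX).1
    exact ⟨h1, Filt.extend (hC X hX).2 (SES_ON h h2) ih.2⟩

end Trace
end QHProof


namespace QHProof
open QHPaper

theorem SES.iso_right {S : Type} [Ring S] {A B X X' : ModuleCat.{0} S} {f : ↥A →ₗ[S] ↥B}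
    {g : ↥B →ₗ[S] ↥X} (h : SES f g) (φ : ↥X ≃ₗ[S] ↥X') :
    SES (A := A) (B := B) (C := X') f (φ.toLinearMap ∘ₗ g) := by
  refine SES.mk' h.1 (φ.surjective.comp h.2.1) ?_ ?_
  · intro a
    show φ (g (f a)) = 0
    rw [h.zero, map_zero]
  · intro b hb
    refine h.ex b (φ.injective ?_)
    rw [map_zero]
    exact hb

section Weights
variable {S : Type} [Ring S] {Λ : Type} [Fintype Λ] [PartialOrder Λ]

/-- A generator of `P ν` of weight `ν`. -/
def IsGen (Q : QHData S Λ) (e : Λ → S) (ν : Λ) (p : ↥(Q.P ν)) : Prop :=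
  e ν • p = p ∧ (∀ y, ∃ s : S, s • p = y) ∧
    ∀ (X : ModuleCat.{0} S) (x : ↥X), e ν • x = x → ∃ φ : ↥(Q.P ν) →ₗ[S] ↥X, φ p = x

variable {Q : QHData S Λ} {e : Λ → S}

theorem exists_gen (he : ∀ l, e l * e l = e l)
    (hproj : ∀ lam, Nonempty (↥(Submodule.span S {e lam}) ≃ₗ[S] ↥(Q.P lam))) (ν : Λ) :
    ∃ p, IsGen Q e ν p := by
  obtain ⟨θ⟩ := hproj ν
  refine ⟨θ ⟨e ν, Submodule.mem_span_singleton_self _⟩, ?_, ?_, ?_⟩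
  · rw [← map_smul]
    congr 1
    exact Subtype.ext (he ν)
  · intro y
    obtain ⟨⟨z, hz⟩, rfl⟩ := θ.surjective y
    obtain ⟨s, rfl⟩ := Submodule.mem_span_singleton.1 hz
    refine ⟨s, ?_⟩
    rw [← map_smul]
    rfl
  · intro X x hx
    refine ⟨LinearMap.toSpanSingleton S ↥X x ∘ₗ (Submodule.subtype _) ∘ₗ
      θ.symm.toLinearMap, ?_⟩
    simp [hx]

theorem ker_le_or {S : Type} [Ring S] {P L : ModuleCat.{0} S} (hL : IsSimpleModule S ↥L)
    {π : ↥P →ₗ[S] ↥L} (hπ : Function.Surjective π)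
    (hs : ∀ N : Submodule S ↥P, N ⊔ LinearMap.ker π = ⊤ → N = ⊤) (K : Submodule S ↥P) :
    K ≤ LinearMap.ker π ∨ K = ⊤ := by
  by_cases h : K ≤ LinearMap.ker π
  · exact Or.inl h
  · right
    apply hs
    have hc : IsCoatom (LinearMap.ker π) := LinearMap.isCoatom_ker_of_surjective hπ
    exact hc.2 _ (right_lt_sup.2 h)

theorem cf_of_ne (hg : ∀ ν, ∃ p, IsGen Q e ν p) {X : ModuleCat.{0} S} {ν : Λ} {x : ↥X} (he : e ν * e ν = e ν)
    (h : e ν • x ≠ 0) : IsCompFactor S (Q.L ν) X := by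
  obtain ⟨p, hp1, hp2, hp3⟩ := hg ν
  obtain ⟨φ, hφ⟩ := hp3 X (e ν • x) (by rw [← mul_smul, he])
  obtain ⟨-, π, hπ, hs⟩ := Q.projCover ν
  have hle : LinearMap.ker φ ≤ LinearMap.ker π := by
    rcases ker_le_or (Q.simpleL ν) hπ hs (LinearMap.ker φ) with h1 | h1
    · exact h1
    · exfalso
      apply h
      rw [← hφ]
      have : p ∈ LinearMap.ker φ := by rw [h1]; trivial
      exact this
  refine ⟨(LinearMap.ker π).map φ, LinearMap.range φ, LinearMap.map_le_range, ⟨?_⟩⟩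
  let ρ : ↥(Q.P ν) →ₗ[S] subquot S ((LinearMap.ker π).map φ) (LinearMap.range φ) :=
    (Submodule.mkQ _) ∘ₗ φ.rangeRestrict
  have hρ : Function.Surjective ρ :=
    (Submodule.mkQ_surjective _).comp φ.surjective_rangeRestrict
  have hk : LinearMap.ker ρ = LinearMap.ker π := by
    ext y
    constructor
    · intro hy
      obtain ⟨z, hz, hzy⟩ := (Submodule.Quotient.mk_eq_zero _).1 (show ρ y = 0 from hy)
      have h1 : y - z ∈ LinearMap.ker π := hle (by
        show φ (y - z) = 0
        rw [map_sub, hzy]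
        exact sub_self _)
      have := Submodule.add_mem _ h1 hz
      rwa [sub_add_cancel] at this
    · intro hy
      exact (Submodule.Quotient.mk_eq_zero _).2 ⟨y, hy, rfl⟩
  exact (ρ.quotKerEquivOfSurjective hρ).symm.trans
    ((Submodule.quotEquivOfEq _ _ hk).trans (π.quotKerEquivOfSurjective hπ))

theorem L_gen (hg : ∀ ν, ∃ p, IsGen Q e ν p) (ν : Λ) : ∃ l : ↥(Q.L ν), e ν • l = l ∧ l ≠ 0 := by
  obtain ⟨p, hp1, hp2, hp3⟩ := hg ν
  obtain ⟨-, π, hπ, hs⟩ := Q.projCover ν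
  refine ⟨π p, by rw [← map_smul, hp1], ?_⟩
  intro h0
  have := Q.simpleL ν
  have := IsSimpleModule.nontrivial S ↥(Q.L ν)
  obtain ⟨l, hl⟩ := exists_ne (0 : ↥(Q.L ν))
  obtain ⟨y, rfl⟩ := hπ l
  obtain ⟨s, rfl⟩ := hp2 y
  apply hl
  rw [map_smul, h0, smul_zero]

theorem ne_of_cf (hg : ∀ ν, ∃ p, IsGen Q e ν p) {X : ModuleCat.{0} S} {ν : Λ} (h : IsCompFactor S (Q.L ν) X) :
    ∃ x : ↥X, e ν • x ≠ 0 := by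
  obtain ⟨A, B, hAB, ⟨θ⟩⟩ := h
  obtain ⟨l, hl, hl0⟩ := L_gen hg ν
  obtain ⟨b, hb⟩ := Submodule.mkQ_surjective _ (θ.symm l)
  refine ⟨b, ?_⟩
  intro h0
  apply hl0
  have h1 : e ν • b = 0 := Subtype.ext h0
  have h2 : θ.symm l = 0 := by
    rw [← hl, map_smul, ← hb, ← map_smul, h1, map_zero]
  exact θ.symm.injective (by rw [h2, map_zero])

theorem std_gen (hg : ∀ ν, ∃ p, IsGen Q e ν p) (ν : Λ) : ∃ x : ↥(Q.std ν), e ν • x = x ∧ ∀ y, ∃ s : S, s • x = y := by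
  obtain ⟨p, hp1, hp2, hp3⟩ := hg ν
  obtain ⟨K, ⟨θ⟩, -⟩ := Q.stdSpec ν
  refine ⟨θ.symm (Submodule.mkQ _ p), ?_, ?_⟩
  · rw [← map_smul, ← map_smul, hp1]
  · intro y
    obtain ⟨z, rfl⟩ := θ.symm.surjective y
    obtain ⟨z, rfl⟩ := Submodule.mkQ_surjective _ z
    obtain ⟨s, rfl⟩ := hp2 z
    exact ⟨s, by rw [← map_smul, ← map_smul]⟩

theorem std_wt (hg : ∀ ν, ∃ p, IsGen Q e ν p) {ν μ : Λ} (he : e ν * e ν = e ν) {x : ↥(Q.std μ)} (h : e ν • x ≠ 0) :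
    ν ≤ μ := by
  obtain ⟨K, ⟨θ⟩, h1, -⟩ := Q.stdSpec μ
  refine h1 ν (cf_of_ne (X := ModuleCat.of S (↥(Q.P μ) ⧸ K)) (x := θ x) hg he ?_)
  intro h0
  apply h
  apply θ.injective
  rw [map_zero, map_smul]
  exact h0

theorem std_nontriv (ν : Λ) : ¬ Subsingleton ↥(Q.std ν) := by
  intro hs
  obtain ⟨n, f, -, -, -, -, hc⟩ := Q.multOne ν
  have hne : Nonempty {i : Fin n // Nonempty
      ((subquot S (f i.castSucc) (f i.succ)) ≃ₗ[S] ↥(Q.L ν))} := by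
    by_contra hn
    rw [not_nonempty_iff] at hn
    rw [Nat.card_of_isEmpty] at hc
    exact absurd hc (by norm_num)
  obtain ⟨i, ⟨θ⟩⟩ := hne
  have := Q.simpleL ν
  have h1 := IsSimpleModule.nontrivial S ↥(Q.L ν)
  have h2 : Subsingleton ↥(Q.L ν) := θ.symm.toEquiv.subsingleton
  exact not_subsingleton _ h2

theorem std_to_L (ν : Λ) : ∃ σ : ↥(Q.std ν) →ₗ[S] ↥(Q.L ν), Function.Surjective σ := by
  obtain ⟨K, ⟨θ⟩, -⟩ := Q.stdSpec ν
  obtain ⟨-, π, hπ, hs⟩ := Q.projCover ν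
  rcases ker_le_or (Q.simpleL ν) hπ hs K with h1 | h1
  · refine ⟨Submodule.liftQ K π h1 ∘ₗ θ.toLinearMap, ?_⟩
    intro l
    obtain ⟨y, rfl⟩ := hπ l
    refine ⟨θ.symm (Submodule.mkQ _ y), ?_⟩
    rw [LinearMap.comp_apply, LinearEquiv.coe_coe, LinearEquiv.apply_symm_apply]
    rfl
  · exfalso
    apply std_nontriv (Q := Q) ν
    have := Submodule.Quotient.subsingleton_iff.2 h1
    exact θ.toEquiv.subsingleton

theorem std_ses (μ : Λ) : ∃ (K : ModuleCat.{0} S) (f : ↥K →ₗ[S] ↥(Q.P μ))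
    (g : ↥(Q.P μ) →ₗ[S] ↥(Q.std μ)), SES f g ∧
      Filt (fun X => ∃ ν, μ ≤ ν ∧ Nonempty (↥X ≃ₗ[S] ↥(Q.std ν))) K := by
  obtain ⟨n, f, g, hf, hge, hc⟩ := Q.projFilt μ
  cases n with
  | zero => simp at hc
  | succ m =>
    have hF := Filt_of_filtration hf
      (fun X => ∃ ν, μ ≤ ν ∧ Nonempty (↥X ≃ₗ[S] ↥(Q.std ν)))
      (fun i X hX => ⟨g i, hge i, hX⟩) (Fin.last m).castSucc
    obtain ⟨θ⟩ := hf.2.2.2 (Fin.last m)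
    have hs := SES_subquot (f (Fin.last m).castSucc) (f (Fin.last m).succ)
      (hf.1 (Fin.castSucc_le_succ _))
    have hs2 := (hs.iso_right (X' := Q.std (g (Fin.last m))) θ).iso_mid (B' := Q.P μ)
      (LinearEquiv.ofTop _ (by rw [Fin.succ_last]; exact hf.2.2.1))
    have hgm : g (Fin.last m) = μ := by
      by_contra hne
      obtain ⟨σ, hσ⟩ := std_to_L (Q := Q) (g (Fin.last m))
      obtain ⟨-, π, hπ, hsup⟩ := Q.projCover μ
      have hτ := hσ.comp hs2.2.1
      rw [← LinearMap.coe_comp] at hτ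
      have hS1 := Q.simpleL (g (Fin.last m))
      have hS2 := Q.simpleL μ
      have c1 := LinearMap.isCoatom_ker_of_surjective hτ
      have c2 := LinearMap.isCoatom_ker_of_surjective hπ
      rcases ker_le_or hS2 hπ hsup _ with h1 | h1
      · have h2 := c1.le_iff_eq c2.1 |>.1 h1
        exact (Q.nonisoL _ _ hne).false
          ((LinearMap.quotKerEquivOfSurjective _ hτ).symm.trans
            ((Submodule.quotEquivOfEq _ _ h2.symm).trans
              (π.quotKerEquivOfSurjective hπ)))
      · exact c1.1 h1
    have key : ∃ (f' : ↥(ModuleCat.of S ↥(f (Fin.last m).castSucc)) →ₗ[S] ↥(Q.P μ))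
        (g' : ↥(Q.P μ) →ₗ[S] ↥(Q.std (g (Fin.last m)))), SES f' g' := ⟨_, _, hs2⟩
    rw [hgm] at key
    obtain ⟨f', g', hk⟩ := key
    exact ⟨_, f', g', hk, hF⟩

end Weights
end QHProof


namespace QHProof
open QHPaper

section Vanish
variable {S : Type} [Ring S] {Λ : Type} [Fintype Λ] [PartialOrder Λ]
variable {Q : QHData S Λ} {e : Λ → S} {ε : S}

theorem Filt_EV {C : ModuleCat.{0} S → Prop} {Y K : ModuleCat.{0} S} {n : ℕ} (hK : Filt C K)
    (hC : ∀ X, C X → EV X Y n) : EV K Y n := by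
  induction hK with
  | zero _ h => exact EV_subsing h n
  | ext A B X f g h _ hX ih => exact EV_mid h ih (hC _ hX)

theorem std_Ycl (hg : ∀ ν, ∃ p, IsGen Q e ν p) {G : Λ → Prop}
    (hG : ∀ γ ν, G γ → γ ≤ ν → G ν) (hεe : ∀ γ, G γ → e γ * ε = e γ) (γ : Λ) (hγ : G γ) :
    Ycl ε (Q.std γ) := by
  intro M hM n
  induction n generalizing γ with
  | zero =>
    rw [EV_zero]
    intro f
    obtain ⟨x, hx, hx2⟩ := std_gen hg γ
    ext y
    obtain ⟨s, rfl⟩ := hx2 y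
    rw [← hx, ← hεe γ hγ, map_smul, map_smul, mul_smul, hM, smul_zero, smul_zero]
    rfl
  | succ n ih =>
    obtain ⟨K, f, g, hs, hK⟩ := std_ses (Q := Q) γ
    refine EV_right hs (Filt_EV hK ?_) (EV_proj (Q.projCover γ).1 n)
    rintro X ⟨ν, hν, ⟨θ⟩⟩
    exact EV_iso θ.symm (ih ν (hG γ ν hγ hν))

theorem std_D (hg : ∀ ν, ∃ p, IsGen Q e ν p) {G : Λ → Prop} (hε : ε * ε = ε)
    (hG : ∀ γ ν, G γ → γ ≤ ν → G ν) (hεe : ∀ γ, G γ → e γ * ε = e γ)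
    (htor : ∀ γ, ¬ G γ → ∀ x : ↥(Q.std γ), ε • x = 0) {N : ModuleCat.{0} S}
    (hN : Filt (fun X => ∃ i, Nonempty (↥X ≃ₗ[S] ↥(Q.std i))) N) :
    Dcl ε N ∧ Filt (fun X => ∃ i, ¬ G i ∧ Nonempty (↥X ≃ₗ[S] ↥(Q.std i)))
      (ModuleCat.of S (↥N ⧸ JN ε ↥N)) := by
  refine Filt_D hε ?_ hN
  rintro X ⟨i, ⟨θ⟩⟩
  by_cases hi : G i
  · have hY : Ycl ε X := fun M hM n =>
      EV_iso θ.symm (std_Ycl hg hG hεe i hi M hM n)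
    have ht := hY.top
    refine ⟨?_, Filt.zero _ (Submodule.Quotient.subsingleton_iff.2 ht)⟩
    intro M hM n
    exact EV_iso (A := X) (B := ModuleCat.of S ↥(JN ε ↥X))
      (LinearEquiv.ofTop _ ht).symm (hY M hM n)
  · have hX : ∀ x : ↥X, ε • x = 0 := by
      intro x
      apply θ.injective
      rw [map_smul, htor i hi, map_zero]
    refine ⟨D_tor hX, Filt.of_mem ⟨i, hi, ⟨?_⟩⟩⟩
    have hb : JN ε ↥X = ⊥ := by
      rw [eq_bot_iff]
      refine JN_le (fun a => ?_)
      rw [hX]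
      exact Submodule.zero_mem _
    exact (Submodule.quotEquivOfEqBot _ hb).trans θ

theorem costd_wt (hg : ∀ ν, ∃ p, IsGen Q e ν p) {ν γ : Λ} (he : e ν * e ν = e ν)
    {x : ↥(Q.costd γ)} (h : e ν • x ≠ 0) : ν ≤ γ := by
  obtain ⟨V, ⟨θ⟩, h1, -⟩ := Q.costdSpec γ
  refine h1 ν (cf_of_ne (X := ModuleCat.of S ↥V) (x := θ x) hg he ?_)
  intro h0
  apply h
  apply θ.injective
  rw [map_zero, map_smul]
  exact h0

theorem std_costd_zero (hg : ∀ ν, ∃ p, IsGen Q e ν p) (he : ∀ ν, e ν * e ν = e ν)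
    {ν γ : Λ} (h : ¬ ν ≤ γ) : EV (Q.std ν) (Q.costd γ) 0 := by
  rw [EV_zero]
  intro f
  obtain ⟨x, hx, hx2⟩ := std_gen hg ν
  ext y
  obtain ⟨s, rfl⟩ := hx2 y
  have h0 : e ν • f x = 0 := by
    by_contra h1
    exact h (costd_wt hg (he ν) h1)
  rw [← hx, map_smul, map_smul, h0, smul_zero]
  rfl

theorem std_costd_one (hg : ∀ ν, ∃ p, IsGen Q e ν p) (he : ∀ ν, e ν * e ν = e ν)
    (μ γ : Λ) : EV (Q.std μ) (Q.costd γ) 1 := by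
  obtain ⟨K, f, g, hs, hK⟩ := std_ses (Q := Q) μ
  by_cases hμ : μ ≤ γ
  · refine EV_one_of_extend hs (EV_proj (Q.projCover μ).1 0) ?_
    intro φ
    obtain ⟨V, ⟨θ⟩, h1, h2⟩ := Q.costdSpec γ
    obtain ⟨ψ, hψ⟩ := (Q.injHull γ).1.out f hs.1 (V.subtype ∘ₗ θ.toLinearMap ∘ₗ φ)
    have hV : ∀ ν, ¬ ν ≤ γ → ∀ v : ↥V, e ν • v = 0 := by
      intro ν hν v
      by_contra h0
      exact hν (h1 ν (cf_of_ne (X := ModuleCat.of S ↥V) (x := v) hg (he ν) h0))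
    have hle : LinearMap.range ψ ≤ V := by
      apply h2
      intro ν hν
      by_contra hνγ
      obtain ⟨⟨_, y, rfl⟩, hx⟩ := ne_of_cf hg hν
      apply hx
      have h3 : g (e ν • y) = 0 := by
        rw [map_smul]
        by_contra h4
        exact hνγ ((std_wt hg (he ν) h4).trans hμ)
      obtain ⟨a, ha⟩ := hs.ex _ h3
      apply Subtype.ext
      show e ν • ψ y = 0
      rw [← he ν, mul_smul, ← map_smul, ← ha, hψ]
      exact congrArg Subtype.val (hV ν hνγ (θ (φ a)))
    refine ⟨θ.symm.toLinearMap ∘ₗ ψ.codRestrict V (fun y => hle ⟨y, rfl⟩), ?_⟩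
    ext a
    apply θ.injective
    apply Subtype.ext
    have := hψ a
    simpa using this
  · refine EV_right hs (Filt_EV hK ?_) (EV_proj (Q.projCover μ).1 0)
    rintro X ⟨ν, hν, ⟨θ⟩⟩
    exact EV_iso θ.symm (std_costd_zero hg he (fun h => hμ (hν.trans h)))

theorem std_costd (hg : ∀ ν, ∃ p, IsGen Q e ν p) (he : ∀ ν, e ν * e ν = e ν)
    (γ : Λ) (n : ℕ) (μ : Λ) : EV (Q.std μ) (Q.costd γ) (n + 1) := by
  induction n generalizing μ with
  | zero => exact std_costd_one hg he μ γ
  | succ n ih =>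
    obtain ⟨K, f, g, hs, hK⟩ := std_ses (Q := Q) μ
    refine EV_right hs (Filt_EV hK ?_) (EV_proj (Q.projCover μ).1 (n + 1))
    rintro X ⟨ν, hν, ⟨θ⟩⟩
    exact EV_iso θ.symm (ih ν)

/-- Elements of `S` killed by right multiplication with the idempotents outside `T`. -/
def WT (e : Λ → S) (T : Finset Λ) : Submodule S S where
  carrier := {s | ∀ l, l ∉ T → s * e l = 0}
  add_mem' := by
    intro a b ha hb l hl
    rw [add_mul, ha l hl, hb l hl, add_zero]
  zero_mem' := by
    intro l _
    rw [zero_mul]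
  smul_mem' := by
    intro c a ha l hl
    rw [smul_eq_mul, mul_assoc, ha l hl, mul_zero]

theorem S_filt (he : ∀ l, e l * e l = e l) (horth : ∀ l m, l ≠ m → e l * e m = 0)
    (hsum : (∑ l, e l) = 1)
    (hproj : ∀ lam, Nonempty (↥(Submodule.span S {e lam}) ≃ₗ[S] ↥(Q.P lam))) :
    Filt (fun X => ∃ i, Nonempty (↥X ≃ₗ[S] ↥(Q.std i))) (ModuleCat.of S S) := by
  classical
  have key : ∀ T : Finset Λ, Filt (fun X => ∃ i, Nonempty (↥X ≃ₗ[S] ↥(Q.std i)))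
      (ModuleCat.of S ↥(WT e T)) := by
    intro T
    induction T using Finset.induction_on with
    | empty =>
      refine Filt.zero _ ⟨?_⟩
      have h0 : ∀ a : ↥(WT e ∅), (a : S) = 0 := by
        intro a
        have : (a : S) * 1 = 0 := by
          rw [← hsum, Finset.mul_sum]
          exact Finset.sum_eq_zero (fun l _ => a.2 l (Finset.notMem_empty l))
        rwa [mul_one] at this
      intro a b
      exact Subtype.ext ((h0 a).trans (h0 b).symm)
    | insert l T hl ih =>
      obtain ⟨n, f, g, hf, -⟩ := Q.projFilt l
      have hP := Filt_of_filtration_top hf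
        (fun X => ∃ i, Nonempty (↥X ≃ₗ[S] ↥(Q.std i))) (fun i X hX => ⟨g i, hX⟩)
      obtain ⟨θ⟩ := hproj l
      have hP' := hP.iso (B := ModuleCat.of S ↥(Submodule.span S {e l})) θ.symm
      have hle : WT e T ≤ WT e (insert l T) := fun a ha m hm =>
        ha m (fun h => hm (Finset.mem_insert_of_mem h))
      refine hP'.extend (A := ModuleCat.of S ↥(WT e T)) (f := Submodule.inclusion hle)
        (g := (LinearMap.toSpanSingleton S S (e l)).restrict
          (p := WT e (insert l T)) (q := Submodule.span S {e l})
          (fun a _ => Submodule.mem_span_singleton.2 ⟨a, rfl⟩)) ?_ ih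
      refine SES.mk' (Submodule.inclusion_injective hle) ?_ ?_ ?_
      · rintro ⟨x, hx⟩
        obtain ⟨s, rfl⟩ := Submodule.mem_span_singleton.1 hx
        refine ⟨⟨s • e l, ?_⟩, ?_⟩
        · intro m hm
          have : l ≠ m := fun h => hm (h ▸ Finset.mem_insert_self _ _)
          rw [smul_eq_mul, mul_assoc, horth l m this, mul_zero]
        · apply Subtype.ext
          show s * e l * e l = s * e l
          rw [mul_assoc, he]
      · intro a
        apply Subtype.ext
        exact a.2 l hl
      · intro b hb
        refine ⟨⟨b.1, ?_⟩, rfl⟩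
        intro m hm
        by_cases hml : m = l
        · rw [hml]
          exact congrArg Subtype.val hb
        · exact b.2 m (by simp [hml, hm])
  refine (key Finset.univ).iso (LinearEquiv.ofTop _ ?_)
  rw [eq_top_iff]
  intro s _ l hl
  exact absurd (Finset.mem_univ l) hl

theorem ON_costd (hg : ∀ ν, ∃ p, IsGen Q e ν p) (γ : Λ) (hεe : e γ * ε = e γ)
    (x : ↥(Q.costd γ)) (hx : x ∈ ON ε ↥(Q.costd γ)) : x = 0 := by
  obtain ⟨V, ⟨θ⟩, -⟩ := Q.costdSpec γ
  obtain ⟨-, ι, hι, hess⟩ := Q.injHull γ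
  have hv := ON_map (V.subtype ∘ₗ θ.toLinearMap) hx
  have hs : ∀ v : ↥(Q.I γ), v ∈ ON ε ↥(Q.I γ) → v = 0 := by
    intro v hv
    have := hess (Submodule.span S {v}) (by
      rw [eq_bot_iff]
      rintro y ⟨hy, l, rfl⟩
      obtain ⟨s, hs⟩ := Submodule.mem_span_singleton.1 hy
      by_contra hne
      have hl : l ≠ 0 := by
        rintro rfl
        exact hne (by rw [map_zero]; exact Submodule.zero_mem _)
      have := Q.simpleL γ
      obtain ⟨l0, hl0, hl1⟩ := L_gen hg γ
      have hm : l0 ∈ Submodule.span S {l} := by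
        rw [IsSimpleModule.span_singleton_eq_top S hl]
        trivial
      obtain ⟨t, rfl⟩ := Submodule.mem_span_singleton.1 hm
      apply hl1
      apply hι
      rw [map_zero, ← hl0, map_smul, map_smul, ← hs, ← hεe, mul_smul, ← mul_smul t s, hv,
        smul_zero])
    exact (Submodule.span_singleton_eq_bot).1 this
  have h0 := hs _ hv
  apply θ.injective
  apply Subtype.ext
  rw [map_zero]
  exact h0

theorem costd_D (hg : ∀ ν, ∃ p, IsGen Q e ν p) {G : Λ → Prop} (hε : ε * ε = ε)
    (he : ∀ l, e l * e l = e l) (horth : ∀ l m, l ≠ m → e l * e m = 0)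
    (hsum : (∑ l, e l) = 1)
    (hproj : ∀ lam, Nonempty (↥(Submodule.span S {e lam}) ≃ₗ[S] ↥(Q.P lam)))
    (hG : ∀ γ ν, G γ → γ ≤ ν → G ν) (hεe : ∀ γ, G γ → e γ * ε = e γ)
    (htor : ∀ γ, ¬ G γ → ∀ x : ↥(Q.std γ), ε • x = 0)
    (htor' : ∀ γ, ¬ G γ → ∀ x : ↥(Q.costd γ), ε • x = 0) {N : ModuleCat.{0} S}
    (hN : Filt (fun X => ∃ i, Nonempty (↥X ≃ₗ[S] ↥(Q.costd i))) N) :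
    Dcl' ε N ∧ Filt (fun X => ∃ i, ¬ G i ∧ Nonempty (↥X ≃ₗ[S] ↥(Q.costd i)))
      (ModuleCat.of S ↥(ON ε ↥N)) := by
  have hRM : Filt (fun X => ∃ i, ¬ G i ∧ Nonempty (↥X ≃ₗ[S] ↥(Q.std i))) (RM ε) :=
    (std_D hg hε hG hεe htor (S_filt he horth hsum hproj)).2
  refine Filt_D' hε ?_ hN
  rintro X ⟨i, ⟨θ⟩⟩
  by_cases hi : G i
  · have hX : ON ε ↥X = ⊥ := by
      rw [eq_bot_iff]
      intro x hx
      have := ON_costd hg i (hεe i hi) _ (ON_map θ.toLinearMap hx)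
      exact θ.injective (this.trans (map_zero θ).symm)
    refine ⟨?_, Filt.zero _ ?_⟩
    · intro n
      refine EV_iso' (A := Q.costd i) (B := ModuleCat.of S (↥X ⧸ ON ε ↥X))
        (θ.symm.trans (Submodule.quotEquivOfEqBot _ hX).symm) ?_
      cases n with
      | zero =>
        rw [EV_zero]
        intro φ
        have h1 := ON_costd hg i (hεe i hi) _ (RM_hom_mem φ)
        refine LinearMap.ext (fun y => ?_)
        obtain ⟨s, rfl⟩ := Submodule.mkQ_surjective _ y
        have : s = s • (1 : S) := by simp
        rw [this, map_smul, map_smul, h1, smul_zero]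
        rfl
      | succ n =>
        refine Filt_EV hRM ?_
        rintro Y ⟨j, -, ⟨η⟩⟩
        exact EV_iso η.symm (std_costd hg he i n j)
    · show Subsingleton ↥(ON ε ↥X)
      rw [hX]
      infer_instance
  · have hX : ∀ x : ↥X, ε • x = 0 := by
      intro x
      apply θ.injective
      rw [map_smul, htor' i hi, map_zero]
    exact ⟨D'_tor hX, Filt.of_mem ⟨i, hi, ⟨(LinearEquiv.ofTop _ (ON_top hX)).trans θ⟩⟩⟩

end Vanish
end QHProof


namespace QHProof
open QHPaper

section Transfer
variable {S SP : Type} [Ring S] [Ring SP] {q : S →+* SP} {ε : S}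

/-- Restriction of scalars. -/
noncomputable abbrev res (q : S →+* SP) (A : ModuleCat.{0} SP) : ModuleCat.{0} S :=
  (ModuleCat.restrictScalars q).obj A

/-- An `S`-linear map between restricted modules is `SP`-linear. -/
noncomputable def up (hq : Function.Surjective q) {A B : ModuleCat.{0} SP}
    (f : ↥(res q A) →ₗ[S] ↥(res q B)) : ↥A →ₗ[SP] ↥B where
  toFun x := f x
  map_add' x y := f.map_add x y
  map_smul' a x := by
    obtain ⟨s, rfl⟩ := hq a
    exact f.map_smul s x

noncomputable def down (q : S →+* SP) {A B : ModuleCat.{0} SP} (f : ↥A →ₗ[SP] ↥B) :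
    ↥(res q A) →ₗ[S] ↥(res q B) where
  toFun x := f x
  map_add' x y := f.map_add x y
  map_smul' s x := f.map_smul (q s) x

theorem upEquiv (hq : Function.Surjective q) {A B : ModuleCat.{0} SP}
    (f : ↥(res q A) ≃ₗ[S] ↥(res q B)) : Nonempty (↥A ≃ₗ[SP] ↥B) :=
  ⟨LinearEquiv.ofBijective (up hq f.toLinearMap) f.bijective⟩

theorem downEquiv (q : S →+* SP) {A B : ModuleCat.{0} SP} (f : ↥A ≃ₗ[SP] ↥B) :
    Nonempty (↥(res q A) ≃ₗ[S] ↥(res q B)) :=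
  ⟨LinearEquiv.ofBijective (down q f.toLinearMap) f.bijective⟩

theorem range_ker_up (hq : Function.Surjective q) {A B C : ModuleCat.{0} SP}
    {f : ↥(res q A) →ₗ[S] ↥(res q B)} {g : ↥(res q B) →ₗ[S] ↥(res q C)}
    (h : LinearMap.range f = LinearMap.ker g) :
    LinearMap.range (up hq f) = LinearMap.ker (up hq g) := by
  ext x
  exact (SetLike.ext_iff.1 h x : (x : ↥(res q B)) ∈ LinearMap.range f ↔ _)

theorem range_ker_down {A B C : ModuleCat.{0} SP}
    {f : ↥A →ₗ[SP] ↥B} {g : ↥B →ₗ[SP] ↥C}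
    (h : LinearMap.range f = LinearMap.ker g) :
    LinearMap.range (down q f) = LinearMap.ker (down q g) := by
  ext x
  exact (SetLike.ext_iff.1 h x : (x : ↥B) ∈ LinearMap.range f ↔ _)

theorem SES_up (hq : Function.Surjective q) {A B C : ModuleCat.{0} SP}
    {f : ↥(res q A) →ₗ[S] ↥(res q B)} {g : ↥(res q B) →ₗ[S] ↥(res q C)} (h : SES f g) :
    SES (up hq f) (up hq g) := ⟨h.1, h.2.1, range_ker_up hq h.2.2⟩

theorem SES_down {A B C : ModuleCat.{0} SP}
    {f : ↥A →ₗ[SP] ↥B} {g : ↥B →ₗ[SP] ↥C} (h : SES f g) :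
    SES (down q f) (down q g) := ⟨h.1, h.2.1, range_ker_down h.2.2⟩

theorem res_tor (hk : ∀ x : S, q x = 0 ↔ x ∈ JN ε S) (A : ModuleCat.{0} SP)
    (x : ↥(res q A)) : ε • x = 0 := by
  have h1 : q ε = 0 := by
    rw [hk]
    have := mem_JN (ε := ε) (1 : S)
    rwa [smul_eq_mul, mul_one] at this
  show q ε • (x : ↥A) = 0
  rw [h1, zero_smul]

theorem exists_lift (hq : Function.Surjective q) (hk : ∀ x : S, q x = 0 ↔ x ∈ JN ε S)
    (X : ModuleCat.{0} S) (hX : ∀ x : ↥X, ε • x = 0) :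
    ∃ X' : ModuleCat.{0} SP, Nonempty (↥(res q X') ≃ₗ[S] ↥X) := by
  have hle : RingHom.ker q ≤ RingHom.ker (Module.toAddMonoidEnd S ↥X) := by
    intro s hs
    have h1 := (hk s).1 hs
    rw [RingHom.mem_ker]
    ext x
    have h2 : JN ε S ≤ LinearMap.ker (LinearMap.toSpanSingleton S ↥X x) := JN_le (fun t => by
      show (ε • t) • x = 0
      rw [smul_assoc]
      exact hX _)
    exact h2 h1
  let φ : SP →+* AddMonoid.End ↥X :=
    q.liftOfSurjective hq ⟨Module.toAddMonoidEnd S ↥X, hle⟩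
  have hφ : ∀ s, φ (q s) = Module.toAddMonoidEnd S ↥X s := fun s =>
    RingHom.liftOfRightInverse_comp_apply _ _ _ _ s
  let _ : Module SP ↥X := Module.compHom ↥X φ
  refine ⟨ModuleCat.of SP ↥X, ⟨?_⟩⟩
  exact {
    toFun := fun x => (show ↥X from x)
    invFun := fun x => (show ↥X from x)
    left_inv := fun _ => rfl
    right_inv := fun _ => rfl
    map_add' := fun _ _ => rfl
    map_smul' := fun s x => by
      show φ (q s) (show ↥X from x) = s • (show ↥X from x)
      rw [hφ]
      rfl }

theorem Filt_up (hq : Function.Surjective q) (hk : ∀ x : S, q x = 0 ↔ x ∈ JN ε S)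
    {E : ModuleCat.{0} S → Prop} {E' : ModuleCat.{0} SP → Prop}
    (hE : ∀ X, E X → ∃ X', E' X' ∧ Nonempty (↥(res q X') ≃ₗ[S] ↥X))
    {X : ModuleCat.{0} S} (hX : Filt E X) :
    ∀ Y : ModuleCat.{0} SP, (↥(res q Y) ≃ₗ[S] ↥X) → Filt E' Y := by
  induction hX with
  | zero X h =>
    intro Y θ
    exact Filt.zero _ (θ.toEquiv.subsingleton : Subsingleton ↥(res q Y))
  | ext A B X f g h hA hX ih =>
    intro Y θ
    obtain ⟨A', ⟨α⟩⟩ := exists_lift hq hk A (by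
      intro a
      apply h.1
      apply θ.symm.injective
      rw [map_smul, map_smul, res_tor hk, map_zero, map_zero])
    obtain ⟨X', hX', ⟨ξ⟩⟩ := hE X hX
    have h1 := (h.iso_mid (B' := res q Y) θ.symm).iso_right (X' := res q X') ξ.symm
    have h2 : SES (A := res q A') (B := res q Y) (C := res q X')
        ((θ.symm.toLinearMap ∘ₗ f) ∘ₗ α.toLinearMap)
        (ξ.symm.toLinearMap ∘ₗ (g ∘ₗ θ.symm.symm.toLinearMap)) := by
      refine ⟨h1.1.comp α.injective, h1.2.1, ?_⟩
      rw [← h1.2.2]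
      exact LinearMap.range_comp_of_range_eq_top _ (LinearMap.range_eq_top.2 α.surjective)
    exact Filt.ext _ _ _ _ _ (SES_up hq h2) (ih A' α) hX'

theorem Filt_down {E : ModuleCat.{0} S → Prop} {E' : ModuleCat.{0} SP → Prop}
    (hE : ∀ X, E' X → E (res q X)) {Y : ModuleCat.{0} SP} (hY : Filt E' Y) :
    Filt E (res q Y) := by
  induction hY with
  | zero X h => exact Filt.zero _ h
  | ext A B X f g h hA hX ih => exact Filt.ext _ _ _ _ _ (SES_down h) ih (hE _ hX)

theorem seq_down {n : ℕ} {N : Fin (n + 2) → ModuleCat.{0} SP}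
    {f : ∀ i : Fin (n + 1), ↥(N i.castSucc) →ₗ[SP] ↥(N i.succ)} (h : IsExactSeq SP n N f) :
    IsExactSeq S n (fun i => res q (N i)) (fun i => down q (f i)) :=
  ⟨h.1, h.2.1, fun i => range_ker_down (h.2.2 i)⟩

theorem seq_up_aux (hq : Function.Surjective q) {n : ℕ} (N : Fin (n + 2) → ModuleCat.{0} SP)
    {f : ∀ i : Fin (n + 1), ↥(res q (N i.castSucc)) →ₗ[S] ↥(res q (N i.succ))}
    (h : IsExactSeq S n (fun i => res q (N i)) f) :
    IsExactSeq SP n N (fun i => up hq (f i)) :=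
  ⟨h.1, h.2.1, fun i => range_ker_up hq (h.2.2 i)⟩

theorem seq_up (hq : Function.Surjective q) (hk : ∀ x : S, q x = 0 ↔ x ∈ JN ε S)
    {n : ℕ} {N : Fin (n + 2) → ModuleCat.{0} S}
    {f : ∀ i : Fin (n + 1), ↥(N i.castSucc) →ₗ[S] ↥(N i.succ)} (h : IsExactSeq S n N f)
    (htor : ∀ i (x : ↥(N i)), ε • x = 0) :
    ∃ (N' : Fin (n + 2) → ModuleCat.{0} SP)
      (f' : ∀ i : Fin (n + 1), ↥(N' i.castSucc) →ₗ[SP] ↥(N' i.succ)),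
      IsExactSeq SP n N' f' ∧ ∀ i, Nonempty (↥(res q (N' i)) ≃ₗ[S] ↥(N i)) := by
  choose N' hN' using fun i => exists_lift hq hk (N i) (htor i)
  have h1 := IsExactSeq_iso (N' := fun i => res q (N' i)) h (fun i => (hN' i).some)
  exact ⟨N', _, seq_up_aux hq N' h1, hN'⟩

end Transfer
end QHProof


namespace QHProof
open QHPaper

section Seqs
variable {S : Type} [Ring S] {ε : S}

theorem SES_ker {A B : ModuleCat.{0} S} (φ : ↥A →ₗ[S] ↥B) :
    SES (A := ModuleCat.of S ↥(LinearMap.ker φ)) (B := A)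
      (C := ModuleCat.of S ↥(LinearMap.range φ)) (LinearMap.ker φ).subtype
      φ.rangeRestrict := by
  refine SES.mk' (Submodule.subtype_injective _) φ.surjective_rangeRestrict ?_ ?_
  · intro a
    exact Subtype.ext a.2
  · intro b hb
    exact ⟨⟨b, congrArg Subtype.val hb⟩, rfl⟩

theorem mid_Q {A B C : ModuleCat.{0} S} {f : ↥A →ₗ[S] ↥B} {g : ↥B →ₗ[S] ↥C}
    (h : LinearMap.range f = LinearMap.ker g)
    (hJ : ∀ y : ↥B, g y ∈ JN ε ↥C → ∃ x ∈ JN ε ↥B, g x = g y) :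
    LinearMap.range (Submodule.mapQ (JN ε ↥A) (JN ε ↥B) f (fun _ hz => JN_map f hz)) =
      LinearMap.ker (Submodule.mapQ (JN ε ↥B) (JN ε ↥C) g (fun _ hz => JN_map g hz)) := by
  ext z
  obtain ⟨z, rfl⟩ := Submodule.mkQ_surjective _ z
  constructor
  · rintro ⟨y, hy⟩
    obtain ⟨y, rfl⟩ := Submodule.mkQ_surjective _ y
    rw [← hy]
    have h0 : g (f y) = 0 := by
      have : f y ∈ LinearMap.range f := ⟨y, rfl⟩
      rw [h] at this
      exact this
    show Submodule.mkQ (JN ε ↥C) (g (f y)) = 0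
    rw [h0, map_zero]
  · intro hz
    obtain ⟨x, hx, hxz⟩ := hJ z ((Submodule.Quotient.mk_eq_zero _).1 hz)
    have h0 : z - x ∈ LinearMap.ker g := by
      rw [LinearMap.mem_ker, map_sub, hxz, sub_self]
    rw [← h] at h0
    obtain ⟨w, hw⟩ := h0
    refine ⟨Submodule.mkQ _ w, ?_⟩
    refine (Submodule.Quotient.eq (JN ε ↥B)).2 ?_
    rw [hw, sub_sub_cancel_left]
    exact Submodule.neg_mem _ hx

theorem seq_Q {n : ℕ} {N : Fin (n + 2) → ModuleCat.{0} S}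
    {f : ∀ i : Fin (n + 1), ↥(N i.castSucc) →ₗ[S] ↥(N i.succ)} (h : IsExactSeq S n N f)
    (hD : ∀ i : Fin (n + 1), Dcl ε (N i.castSucc))
    (htor : ∀ x : ↥(N (Fin.last (n + 1))), ε • x = 0) :
    IsExactSeq S n (fun i => ModuleCat.of S (↥(N i) ⧸ JN ε ↥(N i)))
      (fun i => Submodule.mapQ _ _ (f i) (fun _ hz => JN_map (f i) hz)) := by
  have key : ∀ i : Fin (n + 1), Dcl ε (ModuleCat.of S ↥(LinearMap.range (f i))) ∧
      ∀ y : ↥(N i.castSucc), f i y ∈ JN ε ↥(N i.succ) →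
        ∃ x ∈ JN ε ↥(N i.castSucc), f i x = f i y := by
    intro i
    induction i using Fin.reverseInduction with
    | last =>
      refine ⟨D_tor ?_, ?_⟩
      · intro m
        exact Subtype.ext (htor _)
      · intro y hy
        have hb : JN ε ↥(N (Fin.last n).succ) ≤ ⊥ := JN_le (fun a => by
          have := htor a
          rw [Submodule.mem_bot]
          exact this)
        have h0 : f (Fin.last n) y = 0 := hb hy
        exact ⟨0, Submodule.zero_mem _, by rw [h0, map_zero]⟩
    | cast i ih =>
      obtain ⟨hk1, hk2⟩ := D_ker (SES_ker (f i.succ)) (hD i.succ) ih.1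
      have hr := h.2.2 i
      refine ⟨?_, ?_⟩
      · rw [hr]
        exact hk1
      · intro y hy
        have hy' : f i.castSucc y ∈ LinearMap.ker (f i.succ) := by
          rw [← hr]
          exact ⟨y, rfl⟩
        have h1 : (⟨f i.castSucc y, hy'⟩ : ↥(LinearMap.ker (f i.succ))) ∈
            JN ε ↥(LinearMap.ker (f i.succ)) := by
          have h2 : (⟨f i.castSucc y, hy'⟩ : ↥(LinearMap.ker (f i.succ))) ∈
            (JN ε ↥(N i.succ.castSucc)).comap (LinearMap.ker (f i.succ)).subtype := hy
          rw [hk2] at h2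
          exact h2
        let c : ↥(N i.castSucc.castSucc) →ₗ[S] ↥(LinearMap.ker (f i.succ)) :=
          (f i.castSucc).codRestrict (LinearMap.ker (f i.succ)) (fun z => by
            rw [← hr]
            exact ⟨z, rfl⟩)
        have hc : Function.Surjective c := by
          rintro ⟨z, hz⟩
          have hz' := hz
          rw [← hr] at hz'
          obtain ⟨w, hw⟩ := hz'
          exact ⟨w, Subtype.ext hw⟩
        obtain ⟨x, hx, hx2⟩ := JN_surj c hc h1
        exact ⟨x, hx, congrArg Subtype.val hx2⟩
  refine ⟨?_, ?_, ?_⟩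
  · rw [injective_iff_map_eq_zero]
    intro y hy
    obtain ⟨y, rfl⟩ := Submodule.mkQ_surjective _ y
    obtain ⟨x, hx, hxy⟩ := (key 0).2 y ((Submodule.Quotient.mk_eq_zero _).1 hy)
    rw [← h.1 hxy]
    exact (Submodule.Quotient.mk_eq_zero _).2 hx
  · intro z
    obtain ⟨z, rfl⟩ := Submodule.mkQ_surjective _ z
    obtain ⟨y, rfl⟩ := h.2.1 z
    exact ⟨Submodule.mkQ _ y, rfl⟩
  · intro i
    exact mid_Q (h.2.2 i) (key i.succ).2

theorem seq_O {n : ℕ} {N : Fin (n + 2) → ModuleCat.{0} S}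
    {f : ∀ i : Fin (n + 1), ↥(N i.castSucc) →ₗ[S] ↥(N i.succ)} (h : IsExactSeq S n N f)
    (hD : ∀ i : Fin (n + 1), Dcl' ε (N i.succ))
    (htor : ∀ x : ↥(N 0), ε • x = 0) :
    IsExactSeq S n (fun i => ModuleCat.of S ↥(ON ε ↥(N i)))
      (fun i => (f i).restrict (p := ON ε ↥(N i.castSucc)) (q := ON ε ↥(N i.succ))
        (fun _ hz => ON_map (f i) hz)) := by
  have key : ∀ i : Fin (n + 1), Dcl' ε (ModuleCat.of S ↥(LinearMap.range (f i))) ∧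
      ∀ y ∈ ON ε ↥(N i.succ), y ∈ LinearMap.range (f i) →
        ∃ x ∈ ON ε ↥(N i.castSucc), f i x = y := by
    intro i
    induction i using Fin.induction with
    | zero =>
      refine ⟨D'_tor ?_, ?_⟩
      · rintro ⟨_, x, rfl⟩
        apply Subtype.ext
        show ε • f 0 x = 0
        rw [← map_smul]
        have := htor x
        exact (congrArg (f 0) this).trans (map_zero _)
      · rintro y hy ⟨x, rfl⟩
        exact ⟨x, fun s => htor _, rfl⟩
    | succ i ih =>
      have hr := h.2.2 i
      have ih1 := ih.1
      rw [hr] at ih1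
      obtain ⟨hk1, hk2⟩ := D'_coker (SES_ker (f i.succ)) ih1 (hD i.castSucc)
      refine ⟨hk1, ?_⟩
      intro y hy hy'
      have h1 : (⟨y, hy'⟩ : ↥(LinearMap.range (f i.succ))) ∈
          ON ε ↥(LinearMap.range (f i.succ)) :=
        ON_inj (LinearMap.range (f i.succ)).subtype (Submodule.subtype_injective _) hy
      have h2 : (⟨y, hy'⟩ : ↥(LinearMap.range (f i.succ))) ∈
          (ON ε ↥(N i.succ.castSucc)).map (f i.succ).rangeRestrict := by
        rw [← hk2] at h1
        exact h1
      obtain ⟨x, hx, hx2⟩ := h2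
      exact ⟨x, hx, congrArg Subtype.val hx2⟩
  refine ⟨?_, ?_, ?_⟩
  · intro a b hab
    apply Subtype.ext
    exact h.1 (congrArg Subtype.val hab)
  · rintro ⟨z, hz⟩
    obtain ⟨x, hx, hxz⟩ := (key (Fin.last n)).2 z hz (h.2.1 z)
    exact ⟨⟨x, hx⟩, Subtype.ext hxz⟩
  · intro i
    ext z
    constructor
    · rintro ⟨y, rfl⟩
      apply Subtype.ext
      have : f i.castSucc y.1 ∈ LinearMap.range (f i.castSucc) := ⟨y.1, rfl⟩
      rw [h.2.2 i] at this
      exact this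
    · intro hz
      have h0 : z.1 ∈ LinearMap.ker (f i.succ) := congrArg Subtype.val hz
      rw [← h.2.2 i] at h0
      obtain ⟨x, hx, hxz⟩ := (key i.castSucc).2 z.1 z.2 h0
      exact ⟨⟨x, hx⟩, Subtype.ext hxz⟩

end Seqs
end QHProof


namespace QHProof
open QHPaper

theorem quot_tor_equiv {S : Type} [Ring S] {ε : S} {M : ModuleCat.{0} S}
    (hM : ∀ m : ↥M, ε • m = 0) : Nonempty (↥M ≃ₗ[S] (↥M ⧸ JN ε ↥M)) := by
  have hb : JN ε ↥M = ⊥ := by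
    rw [eq_bot_iff]
    refine JN_le (fun a => ?_)
    rw [hM]
    exact Submodule.zero_mem _
  exact ⟨(Submodule.quotEquivOfEqBot _ hb).symm⟩

section Final
variable {S SP Λ : Type} [Ring S] [Ring SP] [Fintype Λ] [PartialOrder Λ]
  {Q : QHData S Λ} {Pi : Finset Λ} {QP : QHData SP {x : Λ // x ∈ Pi}} {q : S →+* SP} {ε : S}

theorem wfdLE_iff (hq : Function.Surjective q) (hk : ∀ x : S, q x = 0 ↔ x ∈ JN ε S)
    (hstd : ∀ pp : {x : Λ // x ∈ Pi}, Nonempty (↥(res q (QP.std pp)) ≃ₗ[S] ↥(Q.std pp.val)))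
    (hD : ∀ N, Filt (fun X => ∃ i, Nonempty (↥X ≃ₗ[S] ↥(Q.std i))) N →
      Dcl ε N ∧ Filt (fun X => ∃ i, ¬ (i ∉ Pi) ∧ Nonempty (↥X ≃ₗ[S] ↥(Q.std i)))
        (ModuleCat.of S (↥N ⧸ JN ε ↥N)))
    (M : ModuleCat.{0} SP) (d : ℕ) : WfdLE SP QP M d ↔ WfdLE S Q (res q M) d := by
  constructor
  · rintro ⟨N, f, hN, hM, hF⟩
    refine ⟨_, _, seq_down (q := q) hN, congrArg _ hM, fun i => ?_⟩
    rw [InStdFilt_iff]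
    have := hF i
    rw [InStdFilt_iff] at this
    refine Filt_down ?_ this
    rintro X ⟨j, ⟨θ⟩⟩
    obtain ⟨θ'⟩ := downEquiv q θ
    obtain ⟨η⟩ := hstd j
    exact ⟨j.1, ⟨θ'.trans η⟩⟩
  · rintro ⟨N, f, hN, hM, hF⟩
    have hF' := fun i => hD _ ((InStdFilt_iff Q _).1 (hF i))
    have htor : ∀ x : ↥(N (Fin.last (d + 1))), ε • x = 0 := by
      rw [hM]
      exact res_tor hk M
    have hsq := seq_Q hN (fun i => (hF' i).1) htor
    obtain ⟨N', f', hN', hθ⟩ := seq_up hq hk hsq (fun i => JQ_tor)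
    have hMe : Nonempty (↥(res q M) ≃ₗ[S] ↥(N (Fin.last (d + 1)))) := by
      rw [hM]
      exact ⟨LinearEquiv.refl _ _⟩
    obtain ⟨a⟩ := hMe
    obtain ⟨b⟩ := quot_tor_equiv htor
    obtain ⟨c⟩ := hθ (Fin.last (d + 1))
    obtain ⟨φ⟩ := upEquiv hq ((a.trans b).trans c.symm)
    obtain ⟨N'', f'', h1, h2, h3⟩ := exactSeq_replace hN' (Fin.last (d + 1)) M φ
    refine ⟨N'', f'', h1, h2, fun i => ?_⟩
    rw [h3 _ (Fin.castSucc_lt_last i).ne, InStdFilt_iff]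
    obtain ⟨t⟩ := hθ i.castSucc
    refine Filt_up hq hk ?_ (hF' i).2 _ t
    rintro X ⟨j, hj, ⟨θ⟩⟩
    obtain ⟨η⟩ := hstd ⟨j, not_not.1 hj⟩
    exact ⟨_, ⟨⟨j, not_not.1 hj⟩, ⟨LinearEquiv.refl _ _⟩⟩, ⟨η.trans θ.symm⟩⟩

theorem gfdLE_iff (hq : Function.Surjective q) (hk : ∀ x : S, q x = 0 ↔ x ∈ JN ε S)
    (hcostd : ∀ pp : {x : Λ // x ∈ Pi},
      Nonempty (↥(res q (QP.costd pp)) ≃ₗ[S] ↥(Q.costd pp.val)))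
    (hD : ∀ N, Filt (fun X => ∃ i, Nonempty (↥X ≃ₗ[S] ↥(Q.costd i))) N →
      Dcl' ε N ∧ Filt (fun X => ∃ i, ¬ (i ∉ Pi) ∧ Nonempty (↥X ≃ₗ[S] ↥(Q.costd i)))
        (ModuleCat.of S ↥(ON ε ↥N)))
    (M : ModuleCat.{0} SP) (d : ℕ) : GfdLE SP QP M d ↔ GfdLE S Q (res q M) d := by
  constructor
  · rintro ⟨N, f, hN, hM, hF⟩
    refine ⟨_, _, seq_down (q := q) hN, congrArg _ hM, fun i => ?_⟩
    rw [InCostdFilt_iff]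
    have := hF i
    rw [InCostdFilt_iff] at this
    refine Filt_down ?_ this
    rintro X ⟨j, ⟨θ⟩⟩
    obtain ⟨θ'⟩ := downEquiv q θ
    obtain ⟨η⟩ := hcostd j
    exact ⟨j.1, ⟨θ'.trans η⟩⟩
  · rintro ⟨N, f, hN, hM, hF⟩
    have hF' := fun i => hD _ ((InCostdFilt_iff Q _).1 (hF i))
    have htor : ∀ x : ↥(N 0), ε • x = 0 := by
      rw [hM]
      exact res_tor hk M
    have hsq := seq_O hN (fun i => (hF' i).1) htor
    obtain ⟨N', f', hN', hθ⟩ := seq_up hq hk hsq (fun i => ON_tor)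
    have hMe : Nonempty (↥(res q M) ≃ₗ[S] ↥(N 0)) := by
      rw [hM]
      exact ⟨LinearEquiv.refl _ _⟩
    obtain ⟨a⟩ := hMe
    obtain ⟨c⟩ := hθ 0
    obtain ⟨φ⟩ := upEquiv hq ((a.trans (LinearEquiv.ofTop _ (ON_top htor)).symm).trans c.symm)
    obtain ⟨N'', f'', h1, h2, h3⟩ := exactSeq_replace hN' 0 M φ
    refine ⟨N'', f'', h1, h2, fun i => ?_⟩
    rw [h3 _ (Fin.succ_ne_zero i), InCostdFilt_iff]
    obtain ⟨t⟩ := hθ i.succ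
    refine Filt_up hq hk ?_ (hF' i).2 _ t
    rintro X ⟨j, hj, ⟨θ⟩⟩
    obtain ⟨η⟩ := hcostd ⟨j, not_not.1 hj⟩
    exact ⟨_, ⟨⟨j, not_not.1 hj⟩, ⟨LinearEquiv.refl _ _⟩⟩, ⟨η.trans θ.symm⟩⟩

end Final
end QHProof

open QHPaper in
/-- Let `S` be a quasi-hereditary algebra, `Π ⊆ Λ⁺` a saturated subset, and
`S(Π) = S/Se_ΓS` the corresponding quasi-hereditary quotient (where `Γ = Λ⁺ \ Π`), a
quasi-hereditary algebra for the poset `Π` with the same standard and costandard modules.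
For every finite-dimensional `S(Π)`-module `M`, the ∇-filtration dimension of `M` as an
`S(Π)`-module equals the ∇-filtration dimension of `M` as an `S`-module, and likewise for
the Δ-filtration dimension. -/
theorem stmt12 (k S Λ : Type) [Field k] [Ring S] [Algebra k S] [FiniteDimensional k S]
    [Fintype Λ] [PartialOrder Λ] [DecidableEq Λ]
    (QH : QHData S Λ) (Pi : Finset Λ)
    (hsat : ∀ lam ∈ Pi, ∀ mu : Λ, mu < lam → mu ∈ Pi)
    (e : Λ → S)
    (hprim : ∀ lam, IsPrimitiveIdempotent S (e lam))
    (horth : ∀ lam mu : Λ, lam ≠ mu → e lam * e mu = 0)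
    (hsum : (∑ lam, e lam) = 1)
    (hproj : ∀ lam, Nonempty (↥(Submodule.span S {e lam}) ≃ₗ[S] ↥(QH.P lam)))
    -- the quotient algebra `SP = S/Se_ΓS`:
    (SP : Type) [Ring SP] (q : S →+* SP) (hq : Function.Surjective q)
    (hker : ∀ x : S, q x = 0 ↔
      x ∈ Submodule.span S (Set.range (fun t : S => (∑ lam ∈ Piᶜ, e lam) * t)))
    -- the quasi-hereditary structure on `SP`, with the same standards and costandards:
    (QP : QHData SP {x : Λ // x ∈ Pi})
    (hL : ∀ pp : {x : Λ // x ∈ Pi},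
      Nonempty (↥((ModuleCat.restrictScalars q).obj (QP.L pp)) ≃ₗ[S] ↥(QH.L pp.val)))
    (hstd : ∀ pp : {x : Λ // x ∈ Pi},
      Nonempty (↥((ModuleCat.restrictScalars q).obj (QP.std pp)) ≃ₗ[S] ↥(QH.std pp.val)))
    (hcostd : ∀ pp : {x : Λ // x ∈ Pi},
      Nonempty (↥((ModuleCat.restrictScalars q).obj (QP.costd pp)) ≃ₗ[S] ↥(QH.costd pp.val)))
    (M : ModuleCat.{0} SP) (hMfin : Module.Finite SP ↥M) :
    gfd SP QP M = gfd S QH ((ModuleCat.restrictScalars q).obj M) ∧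
    wfd SP QP M = wfd S QH ((ModuleCat.restrictScalars q).obj M) := by
  have he : ∀ l, e l * e l = e l := fun l => (hprim l).1
  obtain ⟨ε, hεdef⟩ : ∃ ε, ε = ∑ lam ∈ Piᶜ, e lam := ⟨_, rfl⟩
  have hεe : ∀ γ, γ ∉ Pi → e γ * ε = e γ := by
    intro γ hγ
    rw [hεdef, Finset.mul_sum, Finset.sum_eq_single γ]
    · exact he γ
    · intro b _ hb
      exact horth γ b (Ne.symm hb)
    · intro h
      exact absurd (Finset.mem_compl.2 hγ) h
  have hε : ε * ε = ε := by
    conv_lhs => rw [hεdef, Finset.sum_mul, ← hεdef]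
    rw [Finset.sum_congr rfl (fun γ hγ => hεe γ (Finset.mem_compl.1 hγ)), ← hεdef]
  have hk : ∀ x : S, q x = 0 ↔ x ∈ QHProof.JN ε S := by
    intro x
    rw [hker, ← hεdef]
    rfl
  have hg := QHProof.exists_gen he hproj
  have hG : ∀ γ ν : Λ, γ ∉ Pi → γ ≤ ν → ν ∉ Pi := by
    intro γ ν hγ hle hν
    rcases hle.eq_or_lt with h | h
    · exact hγ (h ▸ hν)
    · exact hγ (hsat ν hν γ h)
  have htor : ∀ γ, ¬ (γ ∉ Pi) → ∀ x : ↥(QH.std γ), ε • x = 0 := by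
    intro γ hγ x
    obtain ⟨θ⟩ := hstd ⟨γ, not_not.1 hγ⟩
    apply θ.symm.injective
    rw [map_smul, map_zero]
    exact QHProof.res_tor hk _ _
  have htor' : ∀ γ, ¬ (γ ∉ Pi) → ∀ x : ↥(QH.costd γ), ε • x = 0 := by
    intro γ hγ x
    obtain ⟨θ⟩ := hcostd ⟨γ, not_not.1 hγ⟩
    apply θ.symm.injective
    rw [map_smul, map_zero]
    exact QHProof.res_tor hk _ _
  have hw := QHProof.wfdLE_iff hq hk hstd
    (fun N hN => QHProof.std_D hg (G := fun γ => γ ∉ Pi) hε hG hεe htor hN) M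
  have hgf := QHProof.gfdLE_iff hq hk hcostd
    (fun N hN => QHProof.costd_D hg (G := fun γ => γ ∉ Pi) hε he horth hsum hproj hG hεe
      htor htor' hN) M
  constructor
  · unfold gfd
    congr 1
    ext d
    exact hgf d
  · unfold wfd
    congr 1
    ext d
    exact hw d
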